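/- arXiv:1010.2795 — 3 statements merged into one kernel-verified Lean document; each statement's English description precedes it below -/
import Mathlib

section
/- Let M ≥ 1 and let a be smooth on a neighbourhood of the closed punctured unit disc D̄\{0} with e^{2a} ≤ Δa ≤ M e^{2a} there (Gauss curvature of g₀ = e^{2a}|dz|² in [−M,−1]), and suppose g₀ is complete at the origin. Then there exists a sequence of smooth functions u_k : D → ℝ, increasing in k (u_k ≤ u_{k+1} pointwise), such that: (i) u_k = a on D \ D_{1/k}; (ii) u_k ≤ a on D\{0}; (iii) inf_{D_{1/k}} u_k → ∞ as k → ∞; and (iv) there exists C < ∞, independent of k, with −e^{−2u_k}Δu_k ≥ −C on D for all k (the Gauss curvatures of the smooth metrics e^{2u_k}|dz|² on D are uniformly bounded below). -/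
open Complex Metric Set Filter

/-- The flat Laplacian of `u : ℂ → ℝ` at `z`, i.e. `∂²u/∂x² + ∂²u/∂y²`. -/
noncomputable def lap (u : ℂ → ℝ) (z : ℂ) : ℝ :=
  iteratedFDeriv ℝ 2 u z ![1, 1] + iteratedFDeriv ℝ 2 u z ![Complex.I, Complex.I]

open scoped Topology
lemma lap_eq' (u : ℂ → ℝ) (z : ℂ) :
    lap u z = fderiv ℝ (fderiv ℝ u) z 1 1 + fderiv ℝ (fderiv ℝ u) z I I := by
  simp [lap, iteratedFDeriv_two_apply]

lemma cd_fderiv {u : ℂ → ℝ} {z : ℂ} (h : ContDiffAt ℝ 2 u z) :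
    DifferentiableAt ℝ (fderiv ℝ u) z :=
  (h.fderiv_right (m := 1) (by norm_num)).differentiableAt (by norm_num)

lemma cd_ev {u : ℂ → ℝ} {z : ℂ} (h : ContDiffAt ℝ 2 u z) :
    ∀ᶠ w in 𝓝 z, DifferentiableAt ℝ u w :=
  (h.eventually (by norm_num)).mono fun _ hw => hw.differentiableAt (by norm_num)

/-- second derivative from an eventual formula for the first -/
lemma D2_of {u : ℂ → ℝ} {z v : ℂ} (h : ContDiffAt ℝ 2 u z) {g : ℂ → ℝ} {g' : ℂ →L[ℝ] ℝ}
    (hg : ∀ᶠ w in 𝓝 z, fderiv ℝ u w v = g w) (hg' : HasFDerivAt g g' z) :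
    fderiv ℝ (fderiv ℝ u) z v v = g' v := by
  have h1 : HasFDerivAt (fun w => fderiv ℝ u w v)
      ((fderiv ℝ (fderiv ℝ u) z).flip v) z := by
    have := (cd_fderiv h).hasFDerivAt.clm_apply (hasFDerivAt_const v z)
    simpa using this
  have h2 : HasFDerivAt (fun w => fderiv ℝ u w v) g' z := hg'.congr_of_eventuallyEq hg
  rw [← h1.unique h2]; rfl

lemma lap_comp_real {f : ℝ → ℝ} {a : ℂ → ℝ} {z : ℂ} (hf : ContDiffAt ℝ 2 f (a z))
    (ha : ContDiffAt ℝ 2 a z) :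
    lap (fun w => f (a w)) z = deriv f (a z) * lap a z +
      deriv (deriv f) (a z) * ((fderiv ℝ a z 1)^2 + (fderiv ℝ a z I)^2) := by
  have hc : ContDiffAt ℝ 2 (fun w => f (a w)) z := hf.comp z ha
  have hfe : ∀ᶠ w in 𝓝 z, DifferentiableAt ℝ f (a w) :=
    ha.continuousAt.eventually
      ((hf.eventually (by norm_num)).mono fun _ hw => hw.differentiableAt (by norm_num))
  have hdf : DifferentiableAt ℝ (deriv f) (a z) := by
    have : ContDiffAt ℝ 1 (fderiv ℝ f) (a z) := hf.fderiv_right (by norm_num)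
    have h2 := (this.differentiableAt (by norm_num)).clm_apply (differentiableAt_const (1:ℝ))
    simpa using h2
  have key : ∀ v : ℂ, fderiv ℝ (fderiv ℝ (fun w => f (a w))) z v v =
      deriv f (a z) * fderiv ℝ (fderiv ℝ a) z v v + deriv (deriv f) (a z) * (fderiv ℝ a z v)^2 := by
    intro v
    have e1 : ∀ᶠ w in 𝓝 z, fderiv ℝ (fun w => f (a w)) w v = deriv f (a w) * fderiv ℝ a w v := by
      filter_upwards [hfe, cd_ev ha] with w h1 h2
      rw [show fderiv ℝ (fun w => f (a w)) w = _ from (h1.hasDerivAt.comp_hasFDerivAt w h2.hasFDerivAt).fderiv]; simp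
    have d1 : HasFDerivAt (fun w => deriv f (a w)) (deriv (deriv f) (a z) • fderiv ℝ a z) z :=
      hdf.hasDerivAt.comp_hasFDerivAt z (ha.differentiableAt (by norm_num)).hasFDerivAt
    have d2 : HasFDerivAt (fun w => fderiv ℝ a w v) ((fderiv ℝ (fderiv ℝ a) z).flip v) z := by
      have := (cd_fderiv ha).hasFDerivAt.clm_apply (hasFDerivAt_const v z)
      simpa using this
    rw [D2_of hc e1 (d1.mul d2)]
    simp; ring
  rw [lap_eq', lap_eq', key, key]; ring

lemma lap_comp_exp {u : ℂ → ℝ} {q w : ℂ} (hu : ContDiffAt ℝ 2 u (q + exp w)) :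
    lap (fun x => u (q + exp x)) w = ‖exp w‖^2 * lap u (q + exp w) := by
  have hE : ∀ x, HasFDerivAt (fun x => q + exp x) ((ContinuousLinearMap.toSpanSingleton ℂ (exp x)).restrictScalars ℝ) x :=
    fun x => ((Complex.hasDerivAt_exp x).const_add q).hasFDerivAt.restrictScalars ℝ
  have hEc : ContDiff ℝ 2 (fun x : ℂ => q + exp x) := by fun_prop
  have hc : ContDiffAt ℝ 2 (fun x => u (q + exp x)) w := hu.comp w hEc.contDiffAt
  have key : ∀ v : ℂ, fderiv ℝ (fderiv ℝ (fun x => u (q + exp x))) w v v =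
      fderiv ℝ (fderiv ℝ u) (q + exp w) (exp w * v) (exp w * v)
        + fderiv ℝ u (q + exp w) (exp w * v * v) := by
    intro v
    have e1 : ∀ᶠ x in 𝓝 w, fderiv ℝ (fun x => u (q + exp x)) x v
        = fderiv ℝ u (q + exp x) (exp x * v) := by
      have : ∀ᶠ x in 𝓝 w, DifferentiableAt ℝ u (q + exp x) :=
        hEc.continuous.continuousAt.eventually (cd_ev hu)
      filter_upwards [this] with x h1
      have h3 := h1.hasFDerivAt.comp x (hE x)
      have h4 : fderiv ℝ (fun x => u (q + exp x)) x = _ := h3.fderiv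
      rw [h4]; simp [mul_comm]
    have d1 : HasFDerivAt (fun x => fderiv ℝ u (q + exp x)) _ w :=
      (cd_fderiv hu).hasFDerivAt.comp w (hE w)
    have d2 : HasFDerivAt (fun x => exp x * v)
        ((ContinuousLinearMap.toSpanSingleton ℂ (exp w * v)).restrictScalars ℝ) w :=
      ((Complex.hasDerivAt_exp w).mul_const v).hasFDerivAt.restrictScalars ℝ
    rw [D2_of hc e1 (d1.clm_apply d2)]
    simp [mul_comm, add_comm]
  rw [lap_eq', lap_eq', key, key]
  set B := fderiv ℝ (fderiv ℝ u) (q + exp w)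
  set L := fderiv ℝ u (q + exp w)
  set e := exp w
  have h1 : e * 1 = e.re • (1:ℂ) + e.im • I := by
    apply Complex.ext <;> simp
  have h2 : e * I = (-e.im) • (1:ℂ) + e.re • I := by
    apply Complex.ext <;> simp
  have h3 : e * I * I = - (e * 1 * 1) := by ring_nf; simp
  have h4 : ‖e‖^2 = e.re^2 + e.im^2 := by
    rw [← Complex.normSq_eq_norm_sq, Complex.normSq_apply]; ring
  rw [h3, h1, h2, h4, map_neg]
  simp only [map_add, map_smul, add_apply, smul_apply,
    smul_eq_mul]
  ring

lemma lap_add' {u v : ℂ → ℝ} {z : ℂ} (hu : ContDiffAt ℝ 2 u z) (hv : ContDiffAt ℝ 2 v z) :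
    lap (fun w => u w + v w) z = lap u z + lap v z := by
  have key : ∀ x : ℂ, fderiv ℝ (fderiv ℝ (fun w => u w + v w)) z x x =
      fderiv ℝ (fderiv ℝ u) z x x + fderiv ℝ (fderiv ℝ v) z x x := by
    intro x
    have d2 : ∀ {a : ℂ → ℝ}, ContDiffAt ℝ 2 a z →
      HasFDerivAt (fun w => fderiv ℝ a w x) ((fderiv ℝ (fderiv ℝ a) z).flip x) z := by
      intro a ha
      have := (cd_fderiv ha).hasFDerivAt.clm_apply (hasFDerivAt_const x z)
      simpa using this
    rw [D2_of (hu.add hv) (g := fun w => fderiv ℝ u w x + fderiv ℝ v w x) _ ((d2 hu).add (d2 hv))]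
    · simp
    · filter_upwards [cd_ev hu, cd_ev hv] with w h1 h2
      rw [fderiv_fun_add h1 h2]; simp
  rw [lap_eq', lap_eq', lap_eq', key, key]; ring

lemma lap_neg' {u : ℂ → ℝ} {z : ℂ} : lap (fun w => - u w) z = - lap u z := by
  rw [lap_eq', lap_eq']
  have : fderiv ℝ (fun w => - u w) = fun w => - fderiv ℝ u w := by
    ext1 w; simp
  rw [this, fderiv_fun_neg]; simp; ring

lemma lap_re (z : ℂ) : lap (fun w => w.re) z = 0 := by
  rw [lap_eq']
  have : fderiv ℝ (fun w : ℂ => w.re) = fun _ => Complex.reCLM := by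
    ext1 w; exact Complex.reCLM.hasFDerivAt.fderiv
  rw [this]; simp

lemma fderiv_nsq (p w v : ℂ) : fderiv ℝ (fun w : ℂ => ‖w - p‖^2) w v
    = 2 * ((w - p).re * v.re + (w-p).im * v.im) := by
  have := ((hasFDerivAt_id (𝕜 := ℝ) w).sub_const p).norm_sq
  have h4 : fderiv ℝ (fun w : ℂ => ‖w - p‖^2) w = _ := this.fderiv
  rw [h4]; simp [Complex.inner]; ring

lemma cd_nsq (p : ℂ) : ContDiff ℝ 2 (fun w : ℂ => ‖w - p‖^2) :=
  (contDiff_id.sub contDiff_const).norm_sq ℝ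

lemma lap_nsq (p z : ℂ) : lap (fun w : ℂ => ‖w - p‖^2) z = 4 := by
  have key : ∀ v : ℂ, fderiv ℝ (fderiv ℝ (fun w : ℂ => ‖w - p‖^2)) z v v
      = 2 * (v.re * v.re + v.im * v.im) := by
    intro v
    have d : HasFDerivAt (fun w : ℂ => 2 * ((w - p).re * v.re + (w-p).im * v.im))
      ((2:ℝ) • ((v.re) • Complex.reCLM + v.im • Complex.imCLM)) z := by
      have h1 : HasFDerivAt (fun w : ℂ => (w - p).re) Complex.reCLM z := by
        simpa using (Complex.reCLM.hasFDerivAt (x := z)).sub_const p.re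
      have h2 : HasFDerivAt (fun w : ℂ => (w - p).im) Complex.imCLM z := by
        simpa using (Complex.imCLM.hasFDerivAt (x := z)).sub_const p.im
      exact ((h1.mul_const v.re).add (h2.mul_const v.im)).const_mul 2
    rw [D2_of (cd_nsq p).contDiffAt (Filter.Eventually.of_forall fun w => fderiv_nsq p w v) d]
    simp
    ring
  rw [lap_eq', key, key]; norm_num

lemma lap_congr {u v : ℂ → ℝ} {z : ℂ} (h : u =ᶠ[𝓝 z] v) : lap u z = lap v z := by
  unfold lap
  rw [Filter.EventuallyEq.eq_of_nhds (Filter.EventuallyEq.iteratedFDeriv ℝ h 2)]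
lemma line2 {L : ℂ → ℂ →L[ℝ] ℝ} {L' : ℂ →L[ℝ] ℂ →L[ℝ] ℝ} {l : ℝ → ℂ} {v w : ℂ} {s : ℝ}
    (h : HasFDerivAt L L' w) (hw : l s = w) (hl : HasDerivAt l v s) :
    HasDerivAt (fun s => L (l s) v) (L' v v) s := by
  subst hw
  have h1 : HasFDerivAt (fun w => L w v) (L'.flip v) (l s) := by
    have := h.clm_apply (hasFDerivAt_const v (l s))
    simpa using this
  exact h1.comp_hasDerivAt s hl

lemma hasDerivAt_avg {g G : ℂ → ℝ} {T t : ℝ} (ht : t < T)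
    (hg : ContinuousOn g {w | w.re < T}) (hG : ContinuousOn G {w | w.re < T})
    (hd : ∀ w : ℂ, w.re < T → HasDerivAt (fun s : ℝ => g (s + w.im * I)) (G w) w.re) :
    HasDerivAt (fun t : ℝ => ∫ θ in (0:ℝ)..2*Real.pi, g (t + θ * I))
      (∫ θ in (0:ℝ)..2*Real.pi, G (t + θ * I)) t := by
  have hline : ∀ (F : ℂ → ℝ), ContinuousOn F {w | w.re < T} → ∀ s < T,
      Continuous (fun θ : ℝ => F (s + θ * I)) := by
    intro F hF s hs
    refine hF.comp_continuous (by fun_prop) ?_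
    intro θ; simpa using hs
  obtain ⟨t', h1, h2⟩ := exists_between ht
  have hK : IsCompact (Icc (t-1) t' ×ℂ Icc 0 (2*Real.pi)) :=
    isCompact_Icc.reProdIm isCompact_Icc
  obtain ⟨C, hC⟩ := hK.exists_bound_of_continuousOn (f := G) (hG.mono (by
    intro w hw
    rw [Complex.mem_reProdIm] at hw
    exact lt_of_le_of_lt hw.1.2 h2))
  refine (intervalIntegral.hasDerivAt_integral_of_dominated_loc_of_deriv_le
    (F := fun (t : ℝ) (θ : ℝ) => g (t + θ * I)) (F' := fun (t : ℝ) (θ : ℝ) => G (t + θ * I)) (s := Ioo (t-1) t') (bound := fun _ => C) (Ioo_mem_nhds (by linarith) h1) ?_ ?_ ?_ ?_ ?_ ?_).2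
  · filter_upwards [Iio_mem_nhds ht] with s hs
    exact (hline g hg s hs).aestronglyMeasurable
  · exact (hline g hg t ht).intervalIntegrable _ _
  · exact (hline G hG t ht).aestronglyMeasurable
  · refine Filter.Eventually.of_forall fun θ hθ s hs => hC _ ?_
    rw [uIoc_of_le (by positivity)] at hθ
    rw [Complex.mem_reProdIm]
    simp only [add_re, ofReal_re, mul_re, I_re, mul_zero, ofReal_im, I_im, mul_one, sub_self,
      add_zero, add_im, mul_im, zero_add]
    exact ⟨Ioo_subset_Icc_self hs, Ioc_subset_Icc_self hθ⟩
  · exact intervalIntegrable_const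
  · refine Filter.Eventually.of_forall fun θ hθ s hs => ?_
    have := hd (s + θ * I) (by simpa using hs.2.trans h2)
    simpa using this

lemma isOpen_half (T : ℝ) : IsOpen {w : ℂ | w.re < T} :=
  isOpen_lt Complex.continuous_re continuous_const

lemma convex_avg {f : ℂ → ℝ} {T : ℝ} (hf : ContDiffOn ℝ 2 f {w | w.re < T})
    (hper : ∀ w, f (w + (2*Real.pi : ℝ) * I) = f w) (hl : ∀ w : ℂ, w.re < T → 0 ≤ lap f w) :
    ConvexOn ℝ (Iio T) (fun t : ℝ => ∫ θ in (0:ℝ)..2*Real.pi, f (t + θ * I)) := by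
  set S : Set ℂ := {w | w.re < T} with hS
  have hSo : IsOpen S := isOpen_half T
  have hat : ∀ w ∈ S, ContDiffAt ℝ 2 f w := fun w hw => hf.contDiffAt (hSo.mem_nhds hw)
  have c1 : ContDiffOn ℝ 1 (fderiv ℝ f) S := hf.fderiv_of_isOpen hSo (by norm_num)
  have c2 : ContinuousOn (fderiv ℝ (fderiv ℝ f)) S := c1.continuousOn_fderiv_of_isOpen hSo (by norm_num)
  have k1 : ∀ v : ℂ, ContinuousOn (fun w => fderiv ℝ f w v) S := fun v =>
    c1.continuousOn.clm_apply continuousOn_const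
  have k2 : ∀ v : ℂ, ContinuousOn (fun w => fderiv ℝ (fderiv ℝ f) w v v) S := fun v =>
    (c2.clm_apply continuousOn_const).clm_apply continuousOn_const
  have l1 : ∀ (w : ℂ) (s₀ : ℝ), HasDerivAt (fun s : ℝ => (s : ℂ) + w.im * I) 1 s₀ := by
    intro w s₀
    exact (Complex.ofRealCLM.hasDerivAt (x := s₀)).add_const _
  have d1 : ∀ w : ℂ, w.re < T → HasDerivAt (fun s : ℝ => f (s + w.im * I)) (fderiv ℝ f w 1) w.re := by
    intro w hw
    have h := ((hat w hw).differentiableAt (by norm_num)).hasFDerivAt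
    rw [← Complex.re_add_im w] at h
    have := h.comp_hasDerivAt w.re (l1 w w.re)
    rw [Complex.re_add_im w] at this
    exact this
  have d2 : ∀ w : ℂ, w.re < T → HasDerivAt (fun s : ℝ => fderiv ℝ f (s + w.im * I) 1)
      (fderiv ℝ (fderiv ℝ f) w 1 1) w.re := by
    intro w hw
    exact line2 (cd_fderiv (hat w hw)).hasFDerivAt (Complex.re_add_im w) (l1 w w.re)
  have A1 := fun t ht => hasDerivAt_avg (t := t) ht hf.continuousOn (k1 1) d1
  have A2 := fun t ht => hasDerivAt_avg (t := t) ht (k1 1) (k2 1) d2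
  have dA : ∀ t < T, deriv (fun t : ℝ => ∫ θ in (0:ℝ)..2*Real.pi, f (t + θ * I)) =ᶠ[𝓝 t]
      (fun t : ℝ => ∫ θ in (0:ℝ)..2*Real.pi, fderiv ℝ f (t + θ * I) 1) := by
    intro t ht
    filter_upwards [Iio_mem_nhds ht] with s hs using (A1 s hs).deriv
  apply convexOn_of_deriv2_nonneg' (convex_Iio T)
  · exact fun t ht => (A1 t ht).differentiableAt.differentiableWithinAt
  · exact fun t ht => ((A2 t ht).congr_of_eventuallyEq (dA t ht)).differentiableAt.differentiableWithinAt
  · intro t ht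
    have : deriv^[2] (fun t : ℝ => ∫ θ in (0:ℝ)..2*Real.pi, f (t + θ * I)) t = 
      ∫ θ in (0:ℝ)..2*Real.pi, fderiv ℝ (fderiv ℝ f) (t + θ * I) 1 1 :=
      ((A2 t ht).congr_of_eventuallyEq (dA t ht)).deriv
    rw [this]
    have hline : ∀ (F : ℂ → ℝ), ContinuousOn F S → 
        Continuous (fun θ : ℝ => F (t + θ * I)) := by
      intro F hF 
      refine hF.comp_continuous (by fun_prop) ?_
      intro θ; simpa [hS] using ht
    have z : ∫ θ in (0:ℝ)..2*Real.pi, fderiv ℝ (fderiv ℝ f) (t + θ * I) I I = 0 := by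
      have hd : ∀ θ : ℝ, HasDerivAt (fun θ : ℝ => fderiv ℝ f (t + θ * I) I)
          (fderiv ℝ (fderiv ℝ f) (t + θ * I) I I) θ := by
        intro θ
        have h := (cd_fderiv (hat (t + θ * I) (by simpa [hS] using ht))).hasFDerivAt
        have l2 : HasDerivAt (fun s : ℝ => (t : ℂ) + s * I) I θ := by
          simpa using ((Complex.ofRealCLM.hasDerivAt (x := θ)).mul_const I).const_add (t:ℂ)
        exact line2 h rfl l2
      rw [intervalIntegral.integral_eq_sub_of_hasDerivAt (fun θ _ => hd θ)
        ((hline _ (k2 I)).intervalIntegrable _ _)]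
      have : fderiv ℝ f ((t + (0:ℝ) * I : ℂ) + (2*Real.pi : ℝ) * I) = fderiv ℝ f (t + (0:ℝ) * I) := by
        have h3 : (fun w => f (w + (2*Real.pi : ℝ) * I)) = f := funext hper
        rw [← fderiv_comp_add_right, h3]
      simp only [ofReal_zero, zero_mul, add_zero] at this ⊢
      rw [this]; simp
    have : ∫ θ in (0:ℝ)..2*Real.pi, fderiv ℝ (fderiv ℝ f) (t + θ * I) 1 1
       = ∫ θ in (0:ℝ)..2*Real.pi, lap f (t + θ * I) := by
      have h5 := intervalIntegral.integral_add (μ := MeasureTheory.volume) ((hline _ (k2 1)).intervalIntegrable 0 (2*Real.pi))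
        ((hline _ (k2 I)).intervalIntegrable 0 (2*Real.pi))
      simp only [lap_eq']
      rw [h5, z, add_zero]
    rw [this]
    apply intervalIntegral.integral_nonneg (by positivity)
    intro θ _
    exact hl _ (by simpa using ht)

lemma lap_nonpos_of_max {h : ℂ → ℝ} {z : ℂ} (hc : ContDiffAt ℝ 2 h z) (hm : IsLocalMax h z) :
    lap h z ≤ 0 := by
  have key : ∀ v : ℂ, fderiv ℝ (fderiv ℝ h) z v v ≤ 0 := by
    intro v
    have hl : ∀ s : ℝ, HasDerivAt (fun s : ℝ => z + s * v) v s := by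
      intro s
      simpa using ((Complex.ofRealCLM.hasDerivAt (x := s)).mul_const v).const_add z
    have hcont : ContinuousAt (fun s : ℝ => z + s * v) 0 := (hl 0).continuousAt
    have ht : Tendsto (fun s : ℝ => z + s * v) (𝓝 0) (𝓝 z) := by simpa using hcont.tendsto
    set φ : ℝ → ℝ := fun s => h (z + s * v) with hφ
    have e1 : ∀ᶠ s : ℝ in 𝓝 0, deriv φ s = fderiv ℝ h (z + s * v) v := by
      filter_upwards [ht.eventually (cd_ev hc)] with s hs
      exact (hs.hasFDerivAt.comp_hasDerivAt s (hl s)).deriv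
    have e2 : HasDerivAt (fun s : ℝ => fderiv ℝ h (z + s * v) v) (fderiv ℝ (fderiv ℝ h) z v v) 0 := by
      exact line2 (cd_fderiv hc).hasFDerivAt (by simp) (hl 0)
    have e3 : deriv (deriv φ) 0 = fderiv ℝ (fderiv ℝ h) z v v :=
      (e2.congr_of_eventuallyEq e1).deriv
    have hmax : IsLocalMax φ 0 := by
      have : ∀ᶠ s : ℝ in 𝓝 0, h (z + s * v) ≤ h z := ht.eventually hm
      filter_upwards [this] with s hs
      simpa [hφ] using hs
    by_contra hneg
    push Not at hneg
    rw [← e3] at hneg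
    have hφc : ContinuousAt φ 0 := by
      have : ContinuousAt h (z + (0:ℝ) * v) := by simpa using hc.continuousAt
      exact ContinuousAt.comp (f := fun s : ℝ => z + s * v) this hcont
    have hmin := isLocalMin_of_deriv_deriv_pos hneg hmax.deriv_eq_zero hφc
    have hconst : φ =ᶠ[𝓝 0] fun _ => φ 0 := by
      filter_upwards [hmin, hmax] with s h1 h2 using le_antisymm h2 h1
    have : deriv φ =ᶠ[𝓝 0] fun _ => 0 := by
      have := hconst.deriv
      simpa using this
    rw [this.deriv_eq] at hneg
    simp at hneg
  rw [lap_eq']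
  linarith [key 1, key I]

/-- Ahlfors bound -/
lemma ahlfors {b : ℂ → ℝ} {p : ℂ} (hb : ContDiffOn ℝ 2 b (ball p 1)) (hbc : ContinuousOn b (closedBall p 1))
    (hl : ∀ w ∈ ball p 1, Real.exp (2 * b w) ≤ lap b w) : Real.exp (b p) ≤ 2 := by
  obtain ⟨w, hw, hmax⟩ := (isCompact_closedBall p 1).exists_isMaxOn ⟨p, by simp⟩
    (f := fun w => (1 - ‖w - p‖^2) * Real.exp (b w)) (by fun_prop)
  have hp := hmax (show p ∈ closedBall p 1 by simp)
  simp only [mem_ofPred_eq, sub_self, norm_zero] at hp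
  have hpos : 0 < (1 - ‖w - p‖^2) * Real.exp (b w) := lt_of_lt_of_le (by positivity) hp
  have hg : 0 < 1 - ‖w - p‖^2 := pos_of_mul_pos_left hpos (Real.exp_pos _).le
  have hwb : w ∈ ball p 1 := by
    rw [mem_ball_iff_norm]; nlinarith [norm_nonneg (w-p)]
  have hbw : ContDiffAt ℝ 2 b w := hb.contDiffAt (isOpen_ball.mem_nhds hwb)
  have hgc : ContDiff ℝ 2 (fun w => 1 - ‖w - p‖^2) := contDiff_const.sub (cd_nsq p)
  have hgpos : ∀ᶠ x in 𝓝 w, 0 < 1 - ‖x - p‖^2 := hgc.continuous.continuousAt.eventually (lt_mem_nhds hg)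
  have hlog : ContDiffAt ℝ 2 Real.log (1 - ‖w - p‖^2) := Real.contDiffAt_log.2 hg.ne'
  have hlc : ContDiffAt ℝ 2 (fun w => Real.log (1 - ‖w - p‖^2)) w :=
    ContDiffAt.comp (f := fun w => 1 - ‖w - p‖^2) w hlog hgc.contDiffAt
  have hm : IsLocalMax (fun w => Real.log (1 - ‖w - p‖^2) + b w) w := by
    filter_upwards [hgpos, isOpen_ball.mem_nhds hwb] with x hx hxb
    have := hmax (ball_subset_closedBall hxb)
    simp only [mem_ofPred_eq] at this
    have := Real.log_le_log (by positivity) this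
    rwa [Real.log_mul hx.ne' (by positivity), Real.log_mul hg.ne' (by positivity), Real.log_exp,
      Real.log_exp] at this
  have h1 := lap_nonpos_of_max (hlc.add hbw) hm
  rw [lap_add' hlc hbw, lap_comp_real (a := fun w => 1 - ‖w - p‖^2) hlog hgc.contDiffAt] at h1
  have f1 : ∀ v, fderiv ℝ (fun w => 1 - ‖w - p‖^2) w v = - (2 * ((w - p).re * v.re + (w-p).im * v.im)) := by
    intro v; rw [fderiv_const_sub]; simp only [neg_apply]; rw [fderiv_nsq]
  have f2 : lap (fun w => 1 - ‖w - p‖^2) w = -4 := by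
    have : (fun w => 1 - ‖w - p‖^2) = fun w => - (fun w => ‖w-p‖^2 + (-1)) w := by
      ext w; ring
    rw [this, lap_neg', lap_add' (cd_nsq p).contDiffAt contDiffAt_const, lap_nsq]
    simp [lap_eq']
  rw [f1, f1, f2] at h1
  have f3 : deriv Real.log (1 - ‖w - p‖^2) = (1 - ‖w - p‖^2)⁻¹ := Real.deriv_log _
  have f4 : deriv (deriv Real.log) (1 - ‖w - p‖^2) = - ((1 - ‖w - p‖^2)^2)⁻¹ := by
    have : deriv Real.log = fun x => x⁻¹ := by ext x; exact Real.deriv_log x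
    rw [this]; simp
  have hn : ‖w - p‖^2 = (w-p).re^2 + (w-p).im^2 := by
    rw [← Complex.normSq_eq_norm_sq, Complex.normSq_apply]; ring
  rw [f3, f4] at h1
  simp only [one_re, one_im, I_re, I_im] at h1
  have h2 := hl w hwb
  set g := 1 - ‖w - p‖^2 with hgdef
  have h3 : lap b w * g^2 ≤ 4 := by
    have e : g⁻¹ * -4 + -(g ^ 2)⁻¹ * ((-(2 * ((w - p).re * 1 + (w - p).im * 0))) ^ 2 + (-(2 * ((w - p).re * 0 + (w - p).im * 1))) ^ 2) = -4 / g^2 := by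
      field_simp
      nlinarith
    rw [e] at h1
    have : lap b w ≤ 4 / g^2 := by
      have : -4 / g^2 = -(4/g^2) := by ring
      linarith
    rwa [le_div_iff₀ (by positivity)] at this
  have h4 : (g * Real.exp (b w))^2 ≤ 2^2 := by
    have : Real.exp (2 * b w) = Real.exp (b w)^2 := by rw [← Real.exp_nat_mul]; norm_num
    rw [this] at h2
    nlinarith [mul_le_mul_of_nonneg_right h2 (sq_nonneg g)]
  have h5 := abs_le.1 (abs_le_of_sq_le_sq h4 (by norm_num))
  linarith [h5.2, show (1 - (0:ℝ)^2) * Real.exp (b p) = Real.exp (b p) by ring]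
lemma circ_le {u : ℂ → ℝ} {q : ℂ} {R ρ : ℝ} (hu : ContDiffOn ℝ 2 u (ball q R))
    (hl : ∀ w ∈ ball q R, 0 ≤ lap u w) (hρ : 0 < ρ) (hρR : ρ < R) :
    2 * Real.pi * u q ≤ ∫ θ in (0:ℝ)..2*Real.pi, u (q + ρ * exp (θ * I)) := by
  have hR : 0 < R := hρ.trans hρR
  have hin : ∀ w : ℂ, w.re < Real.log R → q + exp w ∈ ball q R := by
    intro w hw
    rw [mem_ball_iff_norm, add_sub_cancel_left, Complex.norm_exp]
    rwa [← Real.lt_log_iff_exp_lt hR]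
  have hat : ∀ w ∈ ball q R, ContDiffAt ℝ 2 u w := fun w hw => hu.contDiffAt (isOpen_ball.mem_nhds hw)
  have hconv := convex_avg (f := fun w => u (q + exp w)) (T := Real.log R)
    (by
      intro w hw
      have hE : ContDiff ℝ 2 (fun x : ℂ => q + exp x) := by fun_prop
      exact (ContDiffAt.comp (f := fun x : ℂ => q + exp x) w (hat _ (hin w hw)) hE.contDiffAt).contDiffWithinAt)
    (by
      intro w
      have : exp (w + (2*Real.pi : ℝ) * I) = exp w := by
        push_cast; exact Complex.exp_periodic w
      simp only [this])
    (by
      intro w hw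
      rw [lap_comp_exp (hat _ (hin w hw))]
      exact mul_nonneg (by positivity) (hl _ (hin w hw)))
  set φ : ℝ → ℝ := fun t : ℝ => ∫ θ in (0:ℝ)..2*Real.pi, u (q + exp (t + θ * I)) with hφ
  have hlim : Tendsto φ atBot (𝓝 (2 * Real.pi * u q)) := by
    rw [Metric.tendsto_nhds]
    intro ε hε
    have hcu : ContinuousAt u q := (hat q (mem_ball_self hR)).continuousAt
    obtain ⟨δ, hδ, hd⟩ := Metric.continuousAt_iff.1 hcu (ε/(4*Real.pi)) (by positivity)
    filter_upwards [eventually_lt_atBot (Real.log δ), eventually_lt_atBot (Real.log R)] with s hs hsR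
    have hcs : Continuous (fun θ : ℝ => u (q + exp (s + θ * I))) := by
      refine hu.continuousOn.comp_continuous (by fun_prop) ?_
      intro θ; exact hin _ (by simpa using hsR)
    have e1 : φ s - 2 * Real.pi * u q = ∫ θ in (0:ℝ)..2*Real.pi, (u (q + exp (s + θ * I)) - u q) := by
      rw [intervalIntegral.integral_sub (hcs.intervalIntegrable _ _) intervalIntegrable_const]
      simp [hφ]
    rw [Real.dist_eq, e1, ← Real.norm_eq_abs]
    have := intervalIntegral.norm_integral_le_of_norm_le_const (a := 0) (b := 2*Real.pi)
      (f := fun θ : ℝ => u (q + exp (s + θ * I)) - u q) (C := ε/(4*Real.pi)) (by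
        intro θ _
        rw [Real.norm_eq_abs, ← Real.dist_eq]
        apply (hd _).le
        rw [dist_eq_norm, add_sub_cancel_left, Complex.norm_exp]
        rw [← Real.lt_log_iff_exp_lt hδ]
        simpa using hs)
    refine lt_of_le_of_lt this ?_
    rw [sub_zero, abs_of_pos (by positivity)]
    field_simp
    norm_num
  set t := Real.log ρ with ht
  have htT : t < Real.log R := Real.log_lt_log hρ hρR
  have hmono : ∀ s < t, φ s ≤ φ t := by
    intro s hs
    have hsl : ∀ᶠ x in atBot, φ s ≤ ((t-s)/(t-x)) * φ x + ((s-x)/(t-x)) * φ t := by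
      filter_upwards [eventually_lt_atBot s] with x hx
      have hpos : 0 < t - x := by linarith
      have := hconv.2 (show x ∈ Iio (Real.log R) by simp; linarith) (show t ∈ Iio (Real.log R) from htT)
        (show 0 ≤ (t-s)/(t-x) from div_nonneg (by linarith) hpos.le)
        (show 0 ≤ (s-x)/(t-x) from div_nonneg (by linarith) hpos.le)
        (by field_simp; ring)
      have e : ((t-s)/(t-x)) • x + ((s-x)/(t-x)) • t = s := by
        simp only [smul_eq_mul]; field_simp; ring
      rw [e] at this
      simpa only [smul_eq_mul] using this
    have hT : Tendsto (fun x : ℝ => t - x) atBot atTop :=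
      tendsto_atTop_add_const_left _ _ tendsto_neg_atBot_atTop
    have l1 : Tendsto (fun x : ℝ => (t-s)/(t-x)) atBot (𝓝 0) := hT.const_div_atTop _
    have l2 : Tendsto (fun x : ℝ => (s-x)/(t-x)) atBot (𝓝 1) := by
      have : Tendsto (fun x : ℝ => 1 - (t-s)/(t-x)) atBot (𝓝 (1 - 0)) := tendsto_const_nhds.sub l1
      rw [sub_zero] at this
      refine this.congr' ?_
      filter_upwards [eventually_lt_atBot s] with x hx
      have hpos : t - x ≠ 0 := by linarith
      field_simp; ring
    have l3 := (l1.mul hlim).add (l2.mul_const (φ t))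
    simp only [zero_mul, zero_add, one_mul] at l3
    exact ge_of_tendsto l3 hsl
  have hfin : 2 * Real.pi * u q ≤ φ t :=
    le_of_tendsto hlim ((eventually_lt_atBot t).mono hmono)
  convert hfin using 1
  simp only [hφ]
  congr 1; ext θ
  rw [Complex.exp_add, ← Complex.ofReal_exp, ht, Real.exp_log hρ]

open MeasureTheory in
lemma area_nonneg {g : ℂ → ℝ} {q : ℂ} {R r : ℝ} (hg : ContDiffOn ℝ 2 g (ball q R))
    (hl : ∀ w ∈ ball q R, 0 ≤ lap g w) (hq : g q = 0) (hrR : r < R) :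
    0 ≤ ∫ x in ball q r, g x := by
  have e1 : ∫ x in ball q r, g x = ∫ x, (ball q r).indicator g (q + x) := by
    rw [integral_add_left_eq_self (fun x => (ball q r).indicator g x) q,
      integral_indicator measurableSet_ball]
  have e2 : ∀ p ∈ polarCoord.target, p.1 • (ball q r).indicator g (q + Complex.polarCoord.symm p)
      = (Iio r ×ˢ univ).indicator (fun p : ℝ × ℝ => p.1 * g (q + p.1 * exp (p.2 * I))) p := by
    intro p hp
    have hp1 : 0 < p.1 := hp.1
    have hsym : Complex.polarCoord.symm p = p.1 * exp (p.2 * I) := by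
      rw [Complex.polarCoord_symm_apply, Complex.exp_mul_I]
      push_cast; rfl
    rw [hsym]
    by_cases h : p.1 < r
    · rw [indicator_of_mem, indicator_of_mem, smul_eq_mul]
      · exact ⟨h, mem_univ _⟩
      · rw [mem_ball_iff_norm, add_sub_cancel_left, norm_mul, Complex.norm_exp_ofReal_mul_I]
        simpa [abs_of_pos hp1] using h
    · rw [indicator_of_notMem, indicator_of_notMem, smul_zero]
      · exact fun h' => h h'.1
      · rw [mem_ball_iff_norm, add_sub_cancel_left, norm_mul, Complex.norm_exp_ofReal_mul_I]
        simpa [abs_of_pos hp1] using h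
  have hms : MeasurableSet (Iio r ×ˢ (univ : Set ℝ)) := measurableSet_Iio.prod MeasurableSet.univ
  rw [e1, ← Complex.integral_comp_polarCoord_symm,
    setIntegral_congr_fun polarCoord.open_target.measurableSet e2,
    setIntegral_indicator hms]
  have hset : polarCoord.target ∩ Iio r ×ˢ univ = Ioo 0 r ×ˢ Ioo (-Real.pi) Real.pi := by
    ext p; simp [polarCoord_target]; tauto
  have hcont : ContinuousOn (fun p : ℝ × ℝ => p.1 * g (q + p.1 * exp (p.2 * I)))
      (Icc 0 r ×ˢ Icc (-Real.pi) Real.pi) := by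
    refine continuousOn_fst.mul (hg.continuousOn.comp (by fun_prop) ?_)
    intro p hp
    rw [mem_ball_iff_norm, add_sub_cancel_left, norm_mul, Complex.norm_exp_ofReal_mul_I]
    have := hp.1
    simp only [mem_Icc] at this
    simp [abs_of_nonneg this.1]; linarith [this.2]
  have hint : IntegrableOn (fun p : ℝ × ℝ => p.1 * g (q + p.1 * exp (p.2 * I)))
      (Ioo 0 r ×ˢ Ioo (-Real.pi) Real.pi) :=
    (hcont.integrableOn_compact (isCompact_Icc.prod isCompact_Icc)).mono_set
      (prod_mono Ioo_subset_Icc_self Ioo_subset_Icc_self)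
  rw [hset, Measure.volume_eq_prod, setIntegral_prod _ (by rwa [← Measure.volume_eq_prod])]
  apply setIntegral_nonneg measurableSet_Ioo
  intro ρ hρ
  have h1 := circ_le hg hl hρ.1 (hρ.2.trans hrR)
  rw [hq, mul_zero] at h1
  have h2 : ∫ θ in (0:ℝ)..2*Real.pi, g (q + ρ * exp (θ * I)) = ∫ θ in (-Real.pi)..Real.pi, g (q + ρ * exp (θ * I)) := by
    have hp : Function.Periodic (fun θ : ℝ => g (q + ρ * exp (θ * I))) (2*Real.pi) := by
      intro θ
      have : exp (((θ + 2*Real.pi : ℝ) : ℂ) * I) = exp (θ * I) := by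
        push_cast; rw [add_mul]; exact Complex.exp_periodic _
      simp only [this]
    have := hp.intervalIntegral_add_eq 0 (-Real.pi)
    rw [zero_add] at this
    rw [this]; congr 1; ring
  simp only
  rw [integral_const_mul]
  apply mul_nonneg hρ.1.le
  rw [← integral_Ioc_eq_integral_Ioo, ← intervalIntegral.integral_of_le (by linarith [Real.pi_pos]), ← h2]
  exact h1

open MeasureTheory in
lemma sub_mean {u : ℂ → ℝ} {q : ℂ} {R r : ℝ} (hu : ContDiffOn ℝ 2 u (ball q R))
    (hl : ∀ w ∈ ball q R, 0 ≤ lap u w) (hr : 0 < r) (hrR : r < R) :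
    Real.pi * r^2 * u q ≤ ∫ x in ball q r, u x := by
  have h := area_nonneg (g := fun w => u w + (- u q)) (hu.add contDiffOn_const) (by
    intro w hw
    rw [lap_add' (hu.contDiffAt (isOpen_ball.mem_nhds hw)) contDiffAt_const]
    have : lap (fun _ => - u q) w = 0 := by simp [lap_eq']
    rw [this, add_zero]; exact hl w hw) (by simp) hrR
  have hi : IntegrableOn u (ball q r) :=
    ((hu.continuousOn.mono (closedBall_subset_ball hrR)).integrableOn_compact
      (isCompact_closedBall q r)).mono_set ball_subset_closedBall
  have hfin : volume (ball q r) ≠ ⊤ := measure_ball_lt_top.ne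
  rw [integral_add hi (integrableOn_const hfin), setIntegral_const] at h
  have hv : volume.real (ball q r) = Real.pi * r^2 := by
    rw [Measure.real, Complex.volume_ball]
    simp [ENNReal.toReal_mul, ENNReal.toReal_ofReal hr.le]; ring
  rw [hv, smul_eq_mul] at h
  linarith
lemma convex_dich {A : ℝ → ℝ} (hA : ConvexOn ℝ (Iio 0) A) {ε t₀ : ℝ} (ht₀ : t₀ < 0) :
    (∃ C, ∀ t ≤ t₀, ε * t - C ≤ A t) ∨ (∃ C, ∀ t ≤ t₀, A t ≤ ε * t + C) := by
  by_cases h1 : ∃ C, ∀ t ≤ t₀, ε * t - C ≤ A t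
  · exact Or.inl h1
  right
  refine ⟨A t₀ - ε * t₀, fun t ht => ?_⟩
  by_contra hlt
  push Not at hlt
  have htt : t < t₀ := by
    rcases ht.lt_or_eq with h | h
    · exact h
    · subst h; linarith
  apply h1
  have hcont : ContinuousOn A (Iio 0) := hA.continuousOn isOpen_Iio
  have hcA : ContinuousOn (fun s => A s - ε * s) (Icc t t₀) :=
    (hcont.mono (fun s hs => lt_of_le_of_lt hs.2 ht₀)).sub (by fun_prop)
  obtain ⟨B, hB⟩ := isCompact_Icc.exists_bound_of_continuousOn hcA
  refine ⟨B, fun s hs => ?_⟩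
  have hB' : ∀ x ∈ Icc t t₀, ε * x - B ≤ A x := by
    intro x hx
    have := hB x hx
    rw [Real.norm_eq_abs] at this
    linarith [(abs_le.1 this).1]
  by_cases hst : t ≤ s
  · exact hB' s ⟨hst, hs⟩
  push Not at hst
  have h3 := hB' t ⟨le_rfl, ht⟩
  have hsl := hA.slope_mono_adjacent (show s ∈ Iio (0:ℝ) by simp; linarith) (show t₀ ∈ Iio (0:ℝ) from ht₀) hst htt
  have h4 : (A t₀ - A t) / (t₀ - t) < ε := by
    rw [div_lt_iff₀ (by linarith)]; linarith
  have h5 := lt_of_le_of_lt hsl h4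
  rw [div_lt_iff₀ (by linarith)] at h5
  linarith

open MeasureTheory in
lemma rect_le {h : ℂ → ℝ} {T : ℝ} (hc : ContinuousOn h {w | w.re < T})
    (hper : ∀ w, h (w + (2*Real.pi : ℝ) * I) = h w) {q : ℂ} (hq : q.re + 1 < T) {K : ℝ}
    (hK : ∀ s ∈ Icc (q.re-1) (q.re+1), ∫ θ in (0:ℝ)..2*Real.pi, h (s + θ * I) ≤ K) :
    ∫ x in (Icc (q.re-1) (q.re+1) ×ℂ Icc (q.im-Real.pi) (q.im+Real.pi)), h x ≤ 2 * K := by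
  have hpi := Real.pi_pos
  have e1 : ∫ x in (Icc (q.re-1) (q.re+1) ×ℂ Icc (q.im-Real.pi) (q.im+Real.pi)), h x
      = ∫ p in (Icc (q.re-1) (q.re+1) ×ˢ Icc (q.im-Real.pi) (q.im+Real.pi)), h (p.1 + p.2 * I) := by
    rw [← (Complex.volume_preserving_equiv_real_prod.symm).setIntegral_preimage_emb
      measurableEquivRealProd.symm.measurableEmbedding]
    congr 1
    ext p
    congr 1
    apply Complex.ext <;> simp
  have hcont : ContinuousOn (fun p : ℝ × ℝ => h (p.1 + p.2 * I))
     (Icc (q.re-1) (q.re+1) ×ˢ Icc (q.im-Real.pi) (q.im+Real.pi)) := by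
    refine hc.comp (by fun_prop) ?_
    intro p hp
    have := hp.1.2
    simp; linarith
  have hint := hcont.integrableOn_compact (μ := volume) (isCompact_Icc.prod isCompact_Icc)
  rw [Measure.volume_eq_prod] at hint
  rw [e1, Measure.volume_eq_prod, setIntegral_prod _ hint]
  have hint2 : IntegrableOn (fun x : ℝ => ∫ y in Icc (q.im-Real.pi) (q.im+Real.pi), h (x + y * I))
      (Icc (q.re-1) (q.re+1)) := by
    have := hint
    rw [IntegrableOn, ← Measure.prod_restrict] at this
    exact this.integral_prod_left
  calc _ ≤ ∫ x in Icc (q.re-1) (q.re+1), K := by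
        apply setIntegral_mono_on hint2 (integrableOn_const (by simp)) measurableSet_Icc
        intro s hs
        refine le_trans (le_of_eq ?_) (hK s hs)
        rw [integral_Icc_eq_integral_Ioc, ← intervalIntegral.integral_of_le (by linarith)]
        have hp : Function.Periodic (fun θ : ℝ => h (s + θ * I)) (2*Real.pi) := by
          intro θ
          simp only
          rw [← hper (s + θ * I)]
          congr 1; push_cast; ring
        have := hp.intervalIntegral_add_eq 0 (q.im-Real.pi)
        rw [zero_add] at this
        rw [this]; congr 1; ring
    _ = 2 * K := by
        rw [setIntegral_const, smul_eq_mul, Measure.real, Real.volume_Icc]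
        rw [ENNReal.toReal_ofReal (by linarith)]; ring

lemma ball_re {q x : ℂ} {r : ℝ} (hx : x ∈ ball q r) : |x.re - q.re| < r ∧ |x.im - q.im| < r := by
  rw [mem_ball_iff_norm] at hx
  constructor
  · rw [← Complex.sub_re]; exact (Complex.abs_re_le_norm _).trans_lt hx
  · rw [← Complex.sub_im]; exact (Complex.abs_im_le_norm _).trans_lt hx

open MeasureTheory in
lemma upper_h {h : ℂ → ℝ} {T : ℝ} (hc : ContDiffOn ℝ 2 h {w | w.re < T})
    (hper : ∀ w, h (w + (2*Real.pi : ℝ) * I) = h w) (hl : ∀ w : ℂ, w.re < T → 0 ≤ lap h w)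
    (h0 : ∀ w : ℂ, w.re < T → h w ≤ 0) {q : ℂ} (hq : q.re + 5 ≤ T) {K : ℝ}
    (hK : ∀ s ∈ Icc (q.re-1) (q.re+1), ∫ θ in (0:ℝ)..2*Real.pi, h (s + θ * I) ≤ K) :
    16 * Real.pi * h q ≤ 2 * K := by
  have hb : ball q 5 ⊆ {w | w.re < T} := by
    intro x hx
    have := (abs_lt.1 (ball_re hx).1).2
    show x.re < T
    linarith
  have h1 := sub_mean (r := 4) (hc.mono hb) (fun w hw => hl w (hb hw)) (by norm_num) (by norm_num)
  have h2 := rect_le hc.continuousOn hper (q := q) (by linarith) hK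
  have hi : IntegrableOn h (ball q 4) :=
    ((hc.continuousOn.mono ((closedBall_subset_ball (by norm_num)).trans hb)).integrableOn_compact
      (isCompact_closedBall q 4)).mono_set ball_subset_closedBall
  have hm : MeasurableSet (Icc (q.re-1) (q.re+1) ×ℂ Icc (q.im-Real.pi) (q.im+Real.pi)) :=
    (isCompact_Icc.reProdIm isCompact_Icc).measurableSet
  have hsub : (Icc (q.re-1) (q.re+1) ×ℂ Icc (q.im-Real.pi) (q.im+Real.pi)) ⊆ ball q 4 := by
    intro x hx
    rw [Complex.mem_reProdIm] at hx
    obtain ⟨⟨a1, a2⟩, a3, a4⟩ := hx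
    rw [mem_ball_iff_norm]
    have hn : ‖x - q‖^2 = (x.re - q.re)^2 + (x.im-q.im)^2 := by
      rw [← Complex.normSq_eq_norm_sq, Complex.normSq_apply]; simp; ring
    have hpi := Real.pi_lt_d2
    have b1 : (x.re - q.re)^2 ≤ 1 := by nlinarith
    have b2 : (x.im - q.im)^2 ≤ 3.15^2 := by nlinarith
    have : ‖x - q‖^2 < 4^2 := by rw [hn]; norm_num at b2 ⊢; linarith
    exact lt_of_pow_lt_pow_left₀ 2 (by norm_num) this
  have h3 : ∫ x in ball q 4, h x ≤ ∫ x in (Icc (q.re-1) (q.re+1) ×ℂ Icc (q.im-Real.pi) (q.im+Real.pi)), h x := by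
    have := setIntegral_mono_set (f := fun x => - h x) (μ := volume) hi.neg
      (by
        filter_upwards [ae_restrict_mem measurableSet_ball] with x hx
        have hx' := h0 x (hb (ball_subset_ball (by norm_num) hx))
        simpa using hx')
      hsub.eventuallyLE
    rw [integral_neg, integral_neg] at this
    linarith
  linarith

open MeasureTheory in
lemma lower_v {v : ℂ → ℝ} {T M : ℝ} (hM : 0 ≤ M) (hc : ContDiffOn ℝ 2 v {w | w.re < T})
    (hper : ∀ w, v (w + (2*Real.pi : ℝ) * I) = v w) (hl : ∀ w : ℂ, w.re < T → -(4 * M) ≤ lap v w)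
    (h0 : ∀ w : ℂ, w.re < T → 0 ≤ v w) {q : ℂ} (hq : q.re + 2 ≤ T) {K : ℝ}
    (hK : ∀ s ∈ Icc (q.re-1) (q.re+1), ∫ θ in (0:ℝ)..2*Real.pi, v (s + θ * I) ≤ K) :
    Real.pi * v q ≤ 2 * K + M * Real.pi := by
  have hb : ball q 2 ⊆ {w | w.re < T} := by
    intro x hx
    have := (abs_lt.1 (ball_re hx).1).2
    show x.re < T
    linarith
  have hcM : ContDiff ℝ 2 (fun w : ℂ => M * ‖w - q‖^2) := contDiff_const.mul (cd_nsq q)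
  have hlapM : ∀ w, lap (fun w : ℂ => M * ‖w - q‖^2) w = 4 * M := by
    intro w
    rw [lap_comp_real (f := fun x => M * x) (a := fun w : ℂ => ‖w - q‖^2) (by fun_prop) (cd_nsq q).contDiffAt, lap_nsq]
    have : deriv (fun x : ℝ => M * x) = fun _ => M := by
      ext x; simp
    rw [this]; simp; ring
  have h1 := sub_mean (r := 1) (u := fun w => v w + M * ‖w - q‖^2) (q := q) (R := 2)
    ((hc.mono hb).add hcM.contDiffOn) (by
      intro w hw
      rw [lap_add' (hc.contDiffAt ((isOpen_half T).mem_nhds (hb hw))) hcM.contDiffAt, hlapM]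
      linarith [hl w (hb hw)]) (by norm_num) (by norm_num)
  have h2 := rect_le hc.continuousOn hper (q := q) (by linarith) hK
  have hi : IntegrableOn v (ball q 1) :=
    ((hc.continuousOn.mono ((closedBall_subset_ball (by norm_num)).trans hb)).integrableOn_compact
      (isCompact_closedBall q 1)).mono_set ball_subset_closedBall
  have hfin : volume (ball q 1) ≠ ⊤ := measure_ball_lt_top.ne
  have h4 : ∫ x in ball q 1, (v x + M * ‖x - q‖^2) ≤ ∫ x in ball q 1, (v x + M) := by
    apply setIntegral_mono_on
    · exact hi.add ((hcM.continuous.continuousOn.integrableOn_compact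
      (isCompact_closedBall q 1)).mono_set ball_subset_closedBall)
    · exact hi.add (integrableOn_const hfin)
    · exact measurableSet_ball
    · intro x hx
      rw [mem_ball_iff_norm] at hx
      have : ‖x - q‖^2 ≤ 1 := by nlinarith [norm_nonneg (x-q)]
      nlinarith
  rw [integral_add hi (integrableOn_const hfin), setIntegral_const] at h4
  have hv : volume.real (ball q 1) = Real.pi := by
    rw [Measure.real, Complex.volume_ball]
    simp [ENNReal.toReal_mul]
  rw [hv, smul_eq_mul] at h4
  have hpi := Real.pi_gt_three
  have hsub : ball q 1 ⊆ (Icc (q.re-1) (q.re+1) ×ℂ Icc (q.im-Real.pi) (q.im+Real.pi)) := by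
    intro x hx
    rw [Complex.mem_reProdIm]
    have := ball_re hx
    rw [abs_lt, abs_lt] at this
    obtain ⟨⟨a1, a2⟩, a3, a4⟩ := this
    refine ⟨⟨?_, ?_⟩, ?_, ?_⟩ <;> linarith
  have hcp : IsCompact (Icc (q.re-1) (q.re+1) ×ℂ Icc (q.im-Real.pi) (q.im+Real.pi)) :=
    isCompact_Icc.reProdIm isCompact_Icc
  have hrT : (Icc (q.re-1) (q.re+1) ×ℂ Icc (q.im-Real.pi) (q.im+Real.pi)) ⊆ {w | w.re < T} := by
    intro x hx
    rw [Complex.mem_reProdIm] at hx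
    have := hx.1.2
    show x.re < T
    linarith
  have h3 : ∫ x in ball q 1, v x ≤ ∫ x in (Icc (q.re-1) (q.re+1) ×ℂ Icc (q.im-Real.pi) (q.im+Real.pi)), v x := by
    apply setIntegral_mono_set
    · exact (hc.continuousOn.mono hrT).integrableOn_compact hcp
    · filter_upwards [ae_restrict_mem hcp.measurableSet] with x hx
      exact h0 x (hrT hx)
    · exact hsub.eventuallyLE
  simp only [sub_self, norm_zero] at h1
  nlinarith
lemma dich {b : ℂ → ℝ} {M : ℝ} (hM : 0 ≤ M) (hb : ContDiffOn ℝ 2 b {w | w.re < 0})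
    (hper : ∀ w, b (w + (2*Real.pi : ℝ) * I) = b w)
    (h1 : ∀ w : ℂ, w.re < 0 → Real.exp (2 * b w) ≤ lap b w)
    (h2 : ∀ w : ℂ, w.re < 0 → lap b w ≤ M * Real.exp (2 * b w)) :
    (∃ C, ∀ q : ℂ, q.re ≤ -6 → q.re / 2 - C ≤ b q) ∨
    (∃ C, ∀ q : ℂ, q.re ≤ -6 → b q ≤ q.re / 32 + C) := by
  have hpi := Real.pi_pos
  have hexp : ∀ w : ℂ, w.re < -1 → Real.exp (b w) ≤ 2 := by
    intro w hw
    have hs : closedBall w 1 ⊆ {w | w.re < 0} := by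
      intro x hx
      have : |(x - w).re| ≤ 1 := (Complex.abs_re_le_norm _).trans (mem_closedBall_iff_norm.1 hx)
      rw [Complex.sub_re] at this
      have := (abs_le.1 this).2
      show x.re < 0
      linarith
    exact ahlfors (hb.mono (ball_subset_closedBall.trans hs)) (hb.continuousOn.mono hs)
      (fun x hx => h1 x (hs (ball_subset_closedBall hx)))
  set L := Real.log 2 with hL
  have hbL : ∀ w : ℂ, w.re < -1 → b w ≤ L := by
    intro w hw
    rw [hL, Real.le_log_iff_exp_le (by norm_num)]
    exact hexp w hw
  have hsub : {w : ℂ | w.re < -1} ⊆ {w | w.re < 0} := by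
    intro w hw
    have : w.re < -1 := hw
    show w.re < 0
    linarith
  have hb1 := hb.mono hsub
  have hop : IsOpen {w : ℂ | w.re < -1} := isOpen_lt Complex.continuous_re continuous_const
  have hlc : ∀ (c : ℝ) (w : ℂ), w.re < -1 → lap (fun w => b w + c) w = lap b w := by
    intro c w hw
    rw [lap_add' (hb1.contDiffAt (hop.mem_nhds hw)) contDiffAt_const]
    have : lap (fun _ : ℂ => c) w = 0 := by simp [lap_eq']
    rw [this, add_zero]
  have hint : ∀ s : ℝ, s < 0 → IntervalIntegrable (fun θ : ℝ => b (s + θ * I)) MeasureTheory.volume 0 (2*Real.pi) := by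
    intro s hs
    have : Continuous (fun θ : ℝ => b (s + θ * I)) := by
      rw [← continuousOn_univ]
      refine hb.continuousOn.comp (by fun_prop) ?_
      intro θ _
      show (s + θ * I : ℂ).re < 0
      simpa using hs
    exact this.intervalIntegrable _ _
  have hA := convex_avg hb hper (fun w hw => (Real.exp_pos _).le.trans (h1 w hw))
  rcases convex_dich hA (ε := Real.pi / 4) (t₀ := -1) (by norm_num) with ⟨C, hC⟩ | ⟨C, hC⟩
  · left
    refine ⟨(4*Real.pi*L + 2*C + Real.pi/2 + M*Real.pi) / Real.pi - L, fun q hq => ?_⟩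
    have key := lower_v (v := fun w => -(b w + -L)) (T := -1) hM (by fun_prop)
      (fun w => by simp only [hper]) (by
        intro w hw
        rw [lap_neg', hlc _ _ hw]
        have e1 := h2 w (hsub hw)
        have e2 : Real.exp (2 * b w) ≤ 4 := by
          rw [two_mul, Real.exp_add]
          nlinarith [hexp w hw, Real.exp_pos (b w)]
        nlinarith) (by
        intro w hw
        have := hbL w hw
        show _ ≤ _
        linarith) (q := q) (by linarith)
      (K := 2*Real.pi*L + C - Real.pi/4 * (q.re - 1)) (by
        intro s hs
        have e1 := hC s (by linarith [hs.2])
        have : (fun θ : ℝ => -(b (s + θ * I) + -L)) = fun θ : ℝ => L - b (s + θ * I) := by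
          ext θ; ring
        rw [this, intervalIntegral.integral_sub (by simp) (hint s (by linarith [hs.2]))]
        simp only [intervalIntegral.integral_const, smul_eq_mul]
        nlinarith [hs.1])
    have : -(b q + -L) ≤ -q.re/2 + (4*Real.pi*L + 2*C + Real.pi/2 + M*Real.pi) / Real.pi := by
      rw [← mul_le_mul_iff_right₀ hpi, mul_add, mul_div_cancel₀ _ hpi.ne']
      nlinarith
    linarith
  · right
    refine ⟨(Real.pi/2 + 2*C - 4*Real.pi*L) / (16*Real.pi) + L, fun q hq => ?_⟩
    have key := upper_h (h := fun w => b w + -L) (T := -1) (by fun_prop)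
      (fun w => by simp only [hper]) (by
        intro w hw
        rw [hlc _ _ hw]
        exact (Real.exp_pos _).le.trans (h1 w (hsub hw))) (by
        intro w hw
        have := hbL w hw
        show _ ≤ _
        linarith) (q := q) (by linarith)
      (K := Real.pi/4 * (q.re + 1) + C - 2*Real.pi*L) (by
        intro s hs
        have e1 := hC s (by linarith [hs.2])
        rw [intervalIntegral.integral_add (hint s (by linarith [hs.2])) (by simp)]
        simp only [intervalIntegral.integral_const, smul_eq_mul]
        nlinarith [hs.2])
    have : b q + -L ≤ q.re/32 + (Real.pi/2 + 2*C - 4*Real.pi*L) / (16*Real.pi) := by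
      rw [← mul_le_mul_iff_right₀ (show 0 < 16 * Real.pi by positivity), mul_add _ (q.re/32),
        mul_div_cancel₀ _ (show 16 * Real.pi ≠ 0 by positivity)]
      nlinarith
    linarith

lemma blowup (M : ℝ) (hM : 1 ≤ M) (a : ℂ → ℝ) (U : Set ℂ) (hU : IsOpen U)
    (hUsub : closedBall (0:ℂ) 1 \ {0} ⊆ U)
    (ha : ContDiffOn ℝ (⊤ : ℕ∞) a U)
    (hK₁ : ∀ z ∈ closedBall (0:ℂ) 1 \ {0}, Real.exp (2 * a z) ≤ lap a z)
    (hK₂ : ∀ z ∈ closedBall (0:ℂ) 1 \ {0}, lap a z ≤ M * Real.exp (2 * a z))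
    (hcomplete : ∀ γ : ℝ → ℂ, ContDiffOn ℝ (⊤ : ℕ∞) γ (Ico (0:ℝ) 1) →
      (∀ s ∈ Ico (0:ℝ) 1, γ s ∈ ball (0:ℂ) 1 \ {0}) →
      Tendsto γ (nhdsWithin 1 (Iio 1)) (nhds 0) →
      ∫⁻ s in Ioo (0:ℝ) 1, ENNReal.ofReal (Real.exp (a (γ s)) * ‖deriv γ s‖) = ⊤) (R : ℝ) :
    ∃ δ > 0, ∀ z : ℂ, z ≠ 0 → ‖z‖ < δ → R ≤ a z := by
  have hmem : ∀ w : ℂ, w.re < 0 → exp w ∈ closedBall (0:ℂ) 1 \ {0} := by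
    intro w hw
    refine ⟨?_, by simp [Complex.exp_ne_zero]⟩
    rw [mem_closedBall_zero_iff, Complex.norm_exp]
    exact (Real.exp_lt_one_iff.2 hw).le
  have ha2 : ContDiffOn ℝ 2 a U := ha.of_le (WithTop.coe_le_coe.2 (le_top : (2:ℕ∞) ≤ ⊤))
  have hat : ∀ w : ℂ, w.re < 0 → ContDiffAt ℝ 2 a (exp w) := fun w hw =>
    ha2.contDiffAt (hU.mem_nhds (hUsub (hmem w hw)))
  have hlap : ∀ w : ℂ, w.re < 0 → lap (fun w => a (exp w) + w.re) w = ‖exp w‖^2 * lap a (exp w) := by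
    intro w hw
    have e : ContDiffAt ℝ 2 (fun w => a (exp w)) w :=
      (hat w hw).comp w (Complex.contDiff_exp (𝕜 := ℝ)).contDiffAt
    rw [lap_add' (v := fun w => w.re) e Complex.reCLM.contDiff.contDiffAt, lap_re, add_zero]
    have := lap_comp_exp (u := a) (q := 0) (w := w) (by simpa using hat w hw)
    simpa using this
  have hex : ∀ w : ℂ, Real.exp (2 * (a (exp w) + w.re)) = ‖exp w‖^2 * Real.exp (2 * a (exp w)) := by
    intro w
    rw [Complex.norm_exp, ← Real.exp_nat_mul, ← Real.exp_add]
    congr 1; push_cast; ring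
  have D := dich (b := fun w => a (exp w) + w.re) (M := M) (by linarith) (by
      refine ContDiffOn.add ?_ Complex.reCLM.contDiff.contDiffOn
      refine ha2.comp (Complex.contDiff_exp (𝕜 := ℝ)).contDiffOn ?_
      intro w hw
      exact hUsub (hmem w hw)) (by
      intro w
      have : exp (w + ((2*Real.pi:ℝ):ℂ) * I) = exp w := by
        push_cast; exact Complex.exp_periodic w
      simp only [this]; simp) (by
      intro w hw
      rw [hlap w hw, hex]
      exact mul_le_mul_of_nonneg_left (hK₁ _ (hmem w hw)) (by positivity)) (by
      intro w hw
      rw [hlap w hw, hex, mul_left_comm]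
      exact mul_le_mul_of_nonneg_left (hK₂ _ (hmem w hw)) (by positivity))
  have hlog : ∀ z : ℂ, z ≠ 0 → ∀ r : ℝ, ‖z‖ ≤ Real.exp r → (log z).re ≤ r := by
    intro z hz r h
    rw [Complex.log_re]
    exact (Real.log_le_iff_le_exp (norm_pos_iff.2 hz)).2 h
  rcases D with ⟨C, hC⟩ | ⟨C, hC⟩
  · refine ⟨Real.exp (min (-6) (-2 * (R + C))), Real.exp_pos _, fun z hz hlt => ?_⟩
    have e := hlog z hz _ hlt.le
    have e1 := hC (log z) (e.trans (min_le_left _ _))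
    rw [Complex.exp_log hz] at e1
    have e2 := e.trans (min_le_right _ _)
    linarith
  · exfalso
    have hpos := Real.exp_pos (-6)
    have hlt1 : Real.exp (-6) < 1 := Real.exp_lt_one_iff.2 (by norm_num)
    set c : ℝ := Real.exp (-6) with hc
    have hd : ∀ s : ℝ, HasDerivAt (fun s : ℝ => ((c * (1 - s) : ℝ) : ℂ)) ((-c : ℝ) : ℂ) s := by
      intro s
      have : HasDerivAt (fun s : ℝ => c * (1 - s)) (-c) s := by
        simpa using ((hasDerivAt_id s).const_sub 1).const_mul c
      exact this.ofReal_comp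
    have h := hcomplete (fun s => ((c * (1 - s) : ℝ) : ℂ)) (by
        refine ContDiff.contDiffOn ?_
        exact Complex.ofRealCLM.contDiff.comp (contDiff_const.mul (contDiff_const.sub contDiff_id))) (by
        intro s hs
        have p1 : 0 < c * (1 - s) := mul_pos hpos (by linarith [hs.2])
        refine ⟨?_, fun h => p1.ne' (Complex.ofReal_eq_zero.1 h)⟩
        rw [mem_ball_zero_iff, Complex.norm_real, Real.norm_eq_abs, abs_of_pos p1]
        nlinarith [hs.1]) (by
        have : Continuous (fun s : ℝ => ((c * (1 - s) : ℝ) : ℂ)) := by fun_prop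
        have := this.tendsto 1
        simp only [sub_self, mul_zero, Complex.ofReal_zero] at this
        exact this.mono_left nhdsWithin_le_nhds)
    have hI : MeasureTheory.IntegrableOn (fun s : ℝ => Real.exp C * c ^ (1/32 - 1 : ℝ) * c * (1 - s) ^ (1/32 - 1 : ℝ)) (Ioo 0 1) := by
      have e1 : IntervalIntegrable (fun x : ℝ => x ^ (1/32 - 1 : ℝ)) MeasureTheory.volume 0 1 :=
        intervalIntegral.intervalIntegrable_rpow' (by norm_num)
      have e2 := (e1.comp_sub_left 1).symm
      simp only [sub_self, sub_zero] at e2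
      rw [intervalIntegrable_iff_integrableOn_Ioo_of_le (by norm_num)] at e2
      exact e2.const_mul _
    have hfin : ∫⁻ s in Ioo (0:ℝ) 1, ENNReal.ofReal (Real.exp C * c ^ (1/32 - 1 : ℝ) * c * (1 - s) ^ (1/32 - 1 : ℝ)) < ⊤ :=
      hI.lintegral_lt_top
    refine absurd h (ne_of_lt (lt_of_le_of_lt ?_ hfin))
    refine MeasureTheory.setLIntegral_mono' measurableSet_Ioo fun s hs => ?_
    apply ENNReal.ofReal_le_ofReal
    have p0 : 0 < 1 - s := by linarith [hs.2]
    have p1 : 0 < c * (1 - s) := mul_pos hpos p0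
    have hz : ((c * (1 - s) : ℝ) : ℂ) ≠ 0 := by exact_mod_cast p1.ne'
    have hn : ‖((c * (1 - s) : ℝ) : ℂ)‖ = c * (1 - s) := by
      rw [Complex.norm_real, Real.norm_eq_abs, abs_of_pos p1]
    have e1 := hC (log ((c * (1 - s) : ℝ) : ℂ)) (hlog _ hz _ (by
      rw [hn]; nlinarith [hs.1]))
    rw [Complex.exp_log hz, Complex.log_re, hn] at e1
    simp only [(hd s).deriv]
    have e2 : ‖((-c : ℝ) : ℂ)‖ = c := by
      rw [Complex.norm_real, norm_neg, Real.norm_eq_abs, abs_of_pos hpos]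
    rw [e2]
    have e3 : Real.exp (a ((c * (1 - s) : ℝ) : ℂ)) ≤ Real.exp C * (c * (1-s)) ^ (1/32 - 1 : ℝ) := by
      rw [Real.rpow_def_of_pos p1, ← Real.exp_add]
      apply Real.exp_le_exp.2
      linarith
    rw [Real.mul_rpow hpos.le p0.le] at e3
    calc _ ≤ _ := mul_le_mul_of_nonneg_right e3 hpos.le
      _ = _ := by ring
/-- smooth concave truncation of the identity -/
noncomputable def trF (s : ℝ) : ℝ := ∫ x in (0:ℝ)..s, (1 - Real.smoothTransition x)

lemma trF_hd (s : ℝ) : HasDerivAt trF (1 - Real.smoothTransition s) s := by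
  have hc : Continuous (fun x => 1 - Real.smoothTransition x) :=
    continuous_const.sub Real.smoothTransition.continuous
  exact intervalIntegral.integral_hasDerivAt_right (hc.intervalIntegrable _ _)
    (hc.stronglyMeasurableAtFilter _ _) hc.continuousAt

lemma trF_deriv : deriv trF = fun s => 1 - Real.smoothTransition s :=
  funext fun s => (trF_hd s).deriv

lemma trF_cd : ContDiff ℝ (⊤ : ℕ∞) trF := by
  rw [contDiff_infty_iff_deriv]
  refine ⟨fun s => (trF_hd s).differentiableAt, ?_⟩
  rw [trF_deriv]
  exact contDiff_const.sub Real.smoothTransition.contDiff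

lemma trF_dd (s : ℝ) : deriv (deriv trF) s ≤ 0 := by
  rw [trF_deriv]
  apply Antitone.deriv_nonpos
  intro x y hxy
  have := Real.smoothTransition.monotone hxy
  simp only
  linarith

lemma trF_zero : trF 0 = 0 := by simp [trF]

lemma trF_mono : Monotone trF := by
  apply monotone_of_deriv_nonneg (fun s => (trF_hd s).differentiableAt)
  intro s
  rw [trF_deriv]
  linarith [Real.smoothTransition.le_one s]

lemma trF_sub_mono : Monotone (fun s => s - trF s) := by
  have hd : ∀ s, HasDerivAt (fun s => s - trF s) (1 - (1 - Real.smoothTransition s)) s :=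
    fun s => (hasDerivAt_id s).sub (trF_hd s)
  apply monotone_of_deriv_nonneg (fun s => (hd s).differentiableAt)
  intro s
  rw [(hd s).deriv]
  linarith [Real.smoothTransition.nonneg s]

lemma trF_neg {s : ℝ} (hs : s ≤ 0) : trF s = s := by
  have : trF s = ∫ x in (0:ℝ)..s, (1:ℝ) := by
    apply intervalIntegral.integral_congr
    intro x hx
    rw [uIcc_of_ge hs] at hx
    simp [Real.smoothTransition.zero_of_nonpos hx.2]
  rw [this]; simp

lemma trF_one {s : ℝ} (hs : 1 ≤ s) : trF s = trF 1 := by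
  have hc : Continuous (fun x => 1 - Real.smoothTransition x) :=
    continuous_const.sub Real.smoothTransition.continuous
  have h0 : ∫ x in (1:ℝ)..s, (1 - Real.smoothTransition x) = 0 := by
    rw [intervalIntegral.integral_congr (g := fun _ => (0:ℝ))]
    · simp
    · intro x hx
      rw [uIcc_of_le hs] at hx
      simp [Real.smoothTransition.one_of_one_le hx.1]
  have := intervalIntegral.integral_add_adjacent_intervals (hc.intervalIntegrable (μ := MeasureTheory.volume) 0 1) (hc.intervalIntegrable 1 s)
  rw [h0, add_zero] at this
  exact this.symm

lemma trF_le (s : ℝ) : trF s ≤ s := by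
  rcases le_total s 0 with h | h
  · rw [trF_neg h]
  · have := trF_sub_mono h
    simp only [trF_zero] at this
    linarith

lemma trF_nonneg {s : ℝ} (hs : 0 ≤ s) : 0 ≤ trF s := by
  rw [← trF_zero]; exact trF_mono hs

/-- truncating cusps: given a conformal factor `a`, smooth on a neighbourhood
`U` of the closed punctured unit disc, with Gauss curvature in `[-M,-1]` there and complete
at the origin, there is an increasing sequence of smooth conformal factors `u k` on `D`
with: (i) `u k = a` outside `D_{1/k}`; (ii) `u k ≤ a` on `D \ {0}`;
(iii) `inf_{D_{1/k}} u k → ∞`; (iv) the Gauss curvatures `-e^{-2 u k} Δ(u k)` are bounded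
below by `-C` uniformly in `k`. -/
theorem stmt5 (M : ℝ) (hM : 1 ≤ M) (a : ℂ → ℝ) (U : Set ℂ) (hU : IsOpen U)
    (hUsub : closedBall (0:ℂ) 1 \ {0} ⊆ U)
    (ha : ContDiffOn ℝ (⊤ : ℕ∞) a U)
    (hK₁ : ∀ z ∈ closedBall (0:ℂ) 1 \ {0}, Real.exp (2 * a z) ≤ lap a z)
    (hK₂ : ∀ z ∈ closedBall (0:ℂ) 1 \ {0}, lap a z ≤ M * Real.exp (2 * a z))
    (hcomplete : ∀ γ : ℝ → ℂ, ContDiffOn ℝ (⊤ : ℕ∞) γ (Ico (0:ℝ) 1) →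
      (∀ s ∈ Ico (0:ℝ) 1, γ s ∈ ball (0:ℂ) 1 \ {0}) →
      Tendsto γ (nhdsWithin 1 (Iio 1)) (nhds 0) →
      ∫⁻ s in Ioo (0:ℝ) 1, ENNReal.ofReal (Real.exp (a (γ s)) * ‖deriv γ s‖) = ⊤) :
    ∃ u : ℕ → ℂ → ℝ, ∃ C : ℝ,
      (∀ k : ℕ, 1 ≤ k → ContDiffOn ℝ (⊤ : ℕ∞) (u k) (ball (0:ℂ) 1)) ∧
      (∀ k : ℕ, 1 ≤ k → ∀ z ∈ ball (0:ℂ) 1, u k z ≤ u (k+1) z) ∧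
      (∀ k : ℕ, 1 ≤ k → ∀ z ∈ ball (0:ℂ) 1 \ ball (0:ℂ) (1/k), u k z = a z) ∧
      (∀ k : ℕ, 1 ≤ k → ∀ z ∈ ball (0:ℂ) 1 \ {0}, u k z ≤ a z) ∧
      (∀ R : ℝ, ∃ N : ℕ, ∀ k : ℕ, N ≤ k → ∀ z ∈ ball (0:ℂ) (1/k), R ≤ u k z) ∧
      (∀ k : ℕ, 1 ≤ k → ∀ z ∈ ball (0:ℂ) 1,
        -C ≤ -(Real.exp (-2 * u k z) * lap (u k) z)) := by
  have hblow := blowup M hM a U hU hUsub ha hK₁ hK₂ hcomplete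
  have hbd : ∀ k : ℕ, ∃ B : ℝ, ∀ z : ℂ, 1 ≤ k → 1 / (k:ℝ) ≤ ‖z‖ → ‖z‖ ≤ 1 → a z ≤ B := by
    intro k
    by_cases hk : 1 ≤ k
    swap
    · exact ⟨0, fun z h => absurd h hk⟩
    have hk0 : 0 < 1 / (k:ℝ) := by positivity
    have hcomp : IsCompact (closedBall (0:ℂ) 1 \ ball 0 (1/(k:ℝ))) :=
      (isCompact_closedBall 0 1).diff isOpen_ball
    have hcont : ContinuousOn a (closedBall (0:ℂ) 1 \ ball 0 (1/(k:ℝ))) := by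
      refine ha.continuousOn.mono (Subset.trans ?_ hUsub)
      intro z hz
      refine ⟨hz.1, fun h => hz.2 ?_⟩
      rw [mem_singleton_iff] at h
      rw [h]; exact mem_ball_self hk0
    obtain ⟨B, hB⟩ := hcomp.exists_bound_of_continuousOn hcont
    refine ⟨B, fun z _ h1 h2 => (le_abs_self _).trans (hB z ⟨by simpa using h2, by simpa using h1⟩)⟩
  choose B hB using hbd
  set m : ℕ → ℝ := fun k => k + ∑ j ∈ Finset.range (k+1), |B j| with hm
  have hmk : ∀ k : ℕ, (k:ℝ) ≤ m k := fun k => by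
    have : 0 ≤ ∑ j ∈ Finset.range (k+1), |B j| := Finset.sum_nonneg fun _ _ => abs_nonneg _
    simp only [hm]; linarith
  have hmB : ∀ k : ℕ, B k ≤ m k := fun k => by
    have h1 : |B k| ≤ ∑ j ∈ Finset.range (k+1), |B j| :=
      Finset.single_le_sum (f := fun j => |B j|) (fun _ _ => abs_nonneg _) (by simp)
    have h2 := le_abs_self (B k)
    have h3 : (0:ℝ) ≤ k := by positivity
    simp only [hm]; linarith
  have hmm : ∀ k : ℕ, m k ≤ m (k+1) := fun k => by
    simp only [hm]
    rw [Finset.sum_range_succ _ (k+1)]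
    have := abs_nonneg (B (k+1))
    push_cast
    linarith
  set u : ℕ → ℂ → ℝ := fun k z => if z = 0 then m k + trF 1 else m k + trF (a z - m k) with hu
  have hu0 : ∀ k, u k 0 = m k + trF 1 := fun k => by simp [hu]
  have hun : ∀ k z, z ≠ 0 → u k z = m k + trF (a z - m k) := fun k z hz => by simp [hu, hz]
  have hev0 : ∀ k, u k =ᶠ[𝓝 0] fun _ => m k + trF 1 := by
    intro k
    obtain ⟨δ, hδ, h⟩ := hblow (m k + 1)
    filter_upwards [ball_mem_nhds (0:ℂ) hδ] with z hz
    by_cases h0 : z = 0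
    · rw [h0, hu0]
    · have := h z h0 (by simpa using hz)
      rw [hun k z h0, trF_one (by linarith)]
  have hevn : ∀ k (z : ℂ), z ≠ 0 → u k =ᶠ[𝓝 z] fun w => (fun s => m k + trF (s - m k)) (a w) := by
    intro k z hz
    filter_upwards [isOpen_ne.mem_nhds hz] with w hw
    exact hun k w hw
  have hGcd : ∀ k, ContDiff ℝ (⊤ : ℕ∞) (fun s => m k + trF (s - m k)) := fun k =>
    contDiff_const.add (trF_cd.comp (contDiff_id.sub contDiff_const))
  have hmemU : ∀ z ∈ ball (0:ℂ) 1, z ≠ 0 → z ∈ closedBall (0:ℂ) 1 \ {0} :=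
    fun z hz h0 => ⟨ball_subset_closedBall hz, h0⟩
  have hat : ∀ z ∈ ball (0:ℂ) 1, z ≠ 0 → ContDiffAt ℝ (⊤ : ℕ∞) a z := fun z hz h0 =>
    ha.contDiffAt (hU.mem_nhds (hUsub (hmemU z hz h0)))
  have h2top : (2 : WithTop ℕ∞) ≤ ((⊤ : ℕ∞) : WithTop ℕ∞) :=
    WithTop.coe_le_coe.2 (le_top : (2:ℕ∞) ≤ ⊤)
  have hF1 := trF_nonneg (show (0:ℝ) ≤ 1 by norm_num)
  refine ⟨u, M * Real.exp 2, ?_, ?_, ?_, ?_, ?_, ?_⟩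
  · intro k _ z hz
    apply ContDiffAt.contDiffWithinAt
    by_cases h0 : z = 0
    · subst h0
      exact contDiffAt_const.congr_of_eventuallyEq (hev0 k)
    · refine ContDiffAt.congr_of_eventuallyEq ?_ (hevn k z h0)
      exact (hGcd k).contDiffAt.comp z (hat z hz h0)
  · intro k _ z hz
    by_cases h0 : z = 0
    · subst h0
      rw [hu0, hu0]; linarith [hmm k]
    · rw [hun _ _ h0, hun _ _ h0]
      have := trF_sub_mono (show a z - m (k+1) ≤ a z - m k by linarith [hmm k])
      simp only at this
      linarith
  · intro k hk z hz
    have hk0 : 0 < 1 / (k:ℝ) := by positivity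
    have h1 : 1 / (k:ℝ) ≤ ‖z‖ := by simpa using hz.2
    have h0 : z ≠ 0 := norm_pos_iff.1 (hk0.trans_le h1)
    have h2 : ‖z‖ < 1 := by simpa using hz.1
    have h3 := hB k z hk h1 h2.le
    rw [hun _ _ h0, trF_neg (by linarith [hmB k])]
    ring
  · intro k _ z hz
    rw [hun _ _ hz.2]
    linarith [trF_le (a z - m k)]
  · intro R
    obtain ⟨δ, hδ, h⟩ := hblow R
    obtain ⟨N₁, hN₁⟩ := exists_nat_gt (1/δ)
    obtain ⟨N₂, hN₂⟩ := exists_nat_gt R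
    refine ⟨max N₁ N₂, fun k hk z hz => ?_⟩
    have hk1 : (N₁:ℝ) ≤ k := by exact_mod_cast (le_max_left _ _).trans hk
    have hk2 : (N₂:ℝ) ≤ k := by exact_mod_cast (le_max_right _ _).trans hk
    have hRm : R ≤ m k := by linarith [hmk k]
    by_cases h0 : z = 0
    · subst h0
      rw [hu0]; linarith
    · rw [hun _ _ h0]
      rcases le_total 0 (a z - m k) with hc | hc
      · linarith [trF_nonneg hc]
      · rw [trF_neg hc]
        have hzk : ‖z‖ < 1 / (k:ℝ) := by simpa using hz
        have hd1 : 0 < 1/δ := by positivity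
        have : 1 / (k:ℝ) < δ := by
          rw [div_lt_comm₀ (by linarith) hδ]; linarith
        have := h z h0 (hzk.trans this)
        linarith
  · intro k _ z hz
    apply neg_le_neg
    by_cases h0 : z = 0
    · subst h0
      rw [lap_congr (hev0 k)]
      have : lap (fun _ : ℂ => m k + trF 1) 0 = 0 := by simp [lap_eq']
      rw [this, mul_zero]; positivity
    · rw [lap_congr (hevn k z h0), lap_comp_real ((hGcd k).contDiffAt.of_le h2top)
        ((hat z hz h0).of_le h2top)]
      have hd : deriv (fun s => m k + trF (s - m k)) = fun s => deriv trF (s - m k) := by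
        ext s
        rw [deriv_const_add, deriv_comp_sub_const]
      rw [hd]
      rw [deriv_comp_sub_const]
      beta_reduce
      have hdd := trF_dd (a z - m k)
      have hla := hK₂ z (hmemU z hz h0)
      have hla1 := hK₁ z (hmemU z hz h0)
      have hs : 0 ≤ (fderiv ℝ a z 1)^2 + (fderiv ℝ a z I)^2 := by positivity
      have hneg := mul_nonpos_of_nonpos_of_nonneg hdd hs
      have hFd : deriv trF (a z - m k) = 1 - Real.smoothTransition (a z - m k) := by rw [trF_deriv]
      have hn := Real.smoothTransition.nonneg (a z - m k)
      have hl1 := Real.smoothTransition.le_one (a z - m k)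
      have hep := Real.exp_pos (-2 * u k z)
      by_cases hc : 1 ≤ a z - m k
      · rw [Real.smoothTransition.one_of_one_le hc] at hFd
        rw [hFd, sub_self, zero_mul, zero_add]
        exact (mul_nonpos_of_nonneg_of_nonpos hep.le hneg).trans (by positivity)
      · push Not at hc
        have hau : a z ≤ u k z + 1 := by
          rw [hun _ _ h0]
          rcases le_total 0 (a z - m k) with hc' | hc'
          · linarith [trF_nonneg hc']
          · rw [trF_neg hc']; linarith
        have h4 : deriv trF (a z - m k) * lap a z ≤ M * Real.exp (2 * a z) := by
          rw [hFd]
          have := Real.exp_pos (2 * a z)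
          nlinarith
        calc _ ≤ Real.exp (-2 * u k z) * (M * Real.exp (2 * a z)) :=
              mul_le_mul_of_nonneg_left (by linarith) hep.le
          _ = M * Real.exp (-2 * u k z + 2 * a z) := by rw [Real.exp_add]; ring
          _ ≤ M * Real.exp 2 :=
              mul_le_mul_of_nonneg_left (Real.exp_le_exp.2 (by linarith)) (by linarith)
end

section
/- Let Ω ⊆ ℂ be a bounded open set, T > 0, and let u₁, u₂ : Ω̄ × [0,T] → ℝ be continuous, smooth on Ω × (0,T], and satisfy the Ricci flow equation ∂u_i/∂t = e^{−2u_i}Δu_i on Ω × (0,T]. If u₁ ≤ u₂ on (Ω̄ × {0}) ∪ (∂Ω × [0,T]), then u₁ ≤ u₂ on all of Ω̄ × [0,T]. -/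
open Complex Metric Set

lemma aux_two_le : (2 : WithTop ℕ∞) ≤ ((⊤ : ℕ∞) : WithTop ℕ∞) :=
  WithTop.coe_le_coe.2 (le_top : (2:ℕ∞) ≤ ⊤)

lemma aux_ftc (f f' : ℝ → ℝ) (a b : ℝ) (hab : a ≤ b)
    (hf : ∀ s ∈ Icc a b, HasDerivAt f (f' s) s) (hf' : ContinuousOn f' (Icc a b)) :
    -max (f a) 0 ≤ ∫ s in a..b, (if 0 < f s then f' s else 0) := by
  have hfc : ContinuousOn f (Icc a b) := fun s hs => (hf s hs).continuousAt.continuousWithinAt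
  let g : ℕ → ℝ → ℝ := fun n y => min 1 (n * max y 0)
  have hgc : ∀ n, Continuous (g n) := fun n => by fun_prop
  have hg0 : ∀ n y, 0 ≤ g n y := fun n y => by
    simp only [g]; positivity
  have hg1 : ∀ n y, g n y ≤ 1 := fun n y => min_le_left _ _
  let G : ℕ → ℝ → ℝ := fun n y => ∫ x in (0:ℝ)..y, g n x
  have hG : ∀ n y, HasDerivAt (G n) (g n y) y := fun n y =>
    intervalIntegral.integral_hasDerivAt_right ((hgc n).intervalIntegrable _ _)
      ((hgc n).stronglyMeasurableAtFilter _ _) (hgc n).continuousAt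
  have hGneg : ∀ n y, y ≤ 0 → G n y = 0 := fun n y hy => by
    simp only [G]
    rw [intervalIntegral.integral_congr (g := fun _ => (0:ℝ))]
    · simp
    · intro x hx
      rw [uIcc_of_ge hy] at hx
      simp [g, max_eq_right hx.2]
  have hGnn : ∀ n y, 0 ≤ G n y := fun n y => by
    rcases le_total y 0 with h | h
    · rw [hGneg n y h]
    · exact intervalIntegral.integral_nonneg h (fun x _ => hg0 n x)
  have hGle : ∀ n y, G n y ≤ max y 0 := fun n y => by
    rcases le_total y 0 with h | h
    · rw [hGneg n y h]; exact le_max_right _ _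
    · rw [max_eq_left h]
      have := intervalIntegral.integral_mono_on (μ := MeasureTheory.volume) h
        ((hgc n).intervalIntegrable _ _)
        (continuous_const.intervalIntegrable (μ := MeasureTheory.volume) 0 y)
        (fun x _ => hg1 n x)
      simpa using this
  have hcont : ∀ n, ContinuousOn (fun s => g n (f s) * f' s) (Icc a b) := fun n =>
    ((hgc n).comp_continuousOn hfc).mul hf'
  have hI : ∀ n, -max (f a) 0 ≤ ∫ s in a..b, g n (f s) * f' s := fun n => by
    rw [intervalIntegral.integral_eq_sub_of_hasDerivAt (f := fun s => G n (f s))]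
    · have := hGnn n (f b); have := hGle n (f a); linarith
    · intro s hs
      rw [uIcc_of_le hab] at hs
      exact (hG n (f s)).comp s (hf s hs)
    · apply ContinuousOn.intervalIntegrable; rw [uIcc_of_le hab]; exact hcont n
  refine ge_of_tendsto' (x := Filter.atTop) (f := fun n : ℕ => ∫ s in a..b, g n (f s) * f' s) ?_ hI
  refine intervalIntegral.tendsto_integral_filter_of_dominated_convergence (fun s => |f' s|) ?_ ?_ ?_ ?_
  · refine Filter.Eventually.of_forall fun n => ?_
    rw [uIoc_of_le hab]
    exact ((hcont n).mono Ioc_subset_Icc_self).aestronglyMeasurable measurableSet_Ioc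
  · refine Filter.Eventually.of_forall fun n => Filter.Eventually.of_forall fun s _ => ?_
    rw [Real.norm_eq_abs, abs_mul, abs_of_nonneg (hg0 _ _)]
    exact mul_le_of_le_one_left (abs_nonneg _) (hg1 _ _)
  · apply ContinuousOn.intervalIntegrable; rw [uIcc_of_le hab]; exact hf'.abs
  · refine Filter.Eventually.of_forall fun s _ => ?_
    split_ifs with h
    · apply tendsto_const_nhds.congr'
      obtain ⟨N, hN⟩ := exists_nat_ge (1 / f s)
      filter_upwards [Filter.eventually_ge_atTop N] with n hn
      have : (1:ℝ) ≤ n * f s := by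
        rw [div_le_iff₀ h] at hN
        have : (N:ℝ) ≤ n := by exact_mod_cast hn
        nlinarith
      simp [g, max_eq_left h.le, this]
    · have : ∀ n, g n (f s) = 0 := fun n => by simp [g, max_eq_right (not_lt.mp h)]
      simp [this]

lemma aux_d2 (f : ℂ × ℝ → ℝ) (S : Set (ℂ × ℝ)) (hS : IsOpen S) (hf : ContDiffOn ℝ (⊤ : ℕ∞) f S)
    (e : ℂ) (x : ℂ) (s : ℝ) (hx : (x, s) ∈ S) :
    iteratedFDeriv ℝ 2 (fun z => f (z, s)) x ![e, e] =
      fderiv ℝ (fderiv ℝ f) (x, s) (e, 0) (e, 0) := by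
  rw [iteratedFDeriv_two_apply]
  have hd : ∀ p ∈ S, DifferentiableAt ℝ f p := fun p hp =>
    ((hf.contDiffAt (hS.mem_nhds hp)).differentiableAt (by simp))
  have hd2 : DifferentiableAt ℝ (fderiv ℝ f) (x, s) :=
    ((hf.contDiffAt (hS.mem_nhds hx)).fderiv_right (m := 1) (by rw [one_add_one_eq_two]; exact aux_two_le)).differentiableAt (by simp)
  have hline : ∀ z : ℂ, HasFDerivAt (fun z : ℂ => (z, s)) (ContinuousLinearMap.inl ℝ ℂ ℝ) z :=
    fun z => hasFDerivAt_prodMk_left z s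
  have h1 : (fderiv ℝ (fun z => f (z, s))) =ᶠ[nhds x]
      fun z => (fderiv ℝ f (z, s)).comp (ContinuousLinearMap.inl ℝ ℂ ℝ) := by
    have : ∀ᶠ z in nhds x, (z, s) ∈ S :=
      (by fun_prop : Continuous fun z : ℂ => (z, s)).continuousAt.eventually (hS.mem_nhds hx)
    filter_upwards [this] with z hz
    exact ((hd _ hz).hasFDerivAt.comp z (hline z)).fderiv
  rw [h1.fderiv_eq]
  have h2 := (hd2.hasFDerivAt.comp x (hline x)).clm_comp (hasFDerivAt_const (ContinuousLinearMap.inl ℝ ℂ ℝ) x)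
  have h3 := h2.fderiv
  simp only [Function.comp_def] at h3
  rw [h3]
  simp

lemma aux_sd (f : ℂ × ℝ → ℝ) (S : Set (ℂ × ℝ)) (hS : IsOpen S) (hf : ContDiffOn ℝ (⊤ : ℕ∞) f S)
    (e : ℂ) (x : ℂ) (K : Set ℝ) (hK : IsCompact K) (hx : ∀ s ∈ K, (x, s) ∈ S)
    (κ : ℝ) (hκ : 0 < κ) :
    ContinuousOn (fun s => iteratedFDeriv ℝ 2 (fun z => f (z, s)) x ![e, e]) K ∧
    ∃ r0 > 0, ∀ r : ℝ, 0 < r → r < r0 → ∀ s ∈ K,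
      r ^ 2 * (iteratedFDeriv ℝ 2 (fun z => f (z, s)) x ![e, e] - κ) ≤
      f (x + r * e, s) + f (x - r * e, s) - 2 * f (x, s) := by
  set D : ℂ × ℝ → ℝ := fun p => fderiv ℝ (fderiv ℝ f) p (e, 0) (e, 0) with hD
  have hd : ∀ p ∈ S, DifferentiableAt ℝ f p := fun p hp =>
    ((hf.contDiffAt (hS.mem_nhds hp)).differentiableAt (by simp))
  have hcd : ∀ p ∈ S, ContDiffAt ℝ 1 (fderiv ℝ f) p := fun p hp =>
    ((hf.contDiffAt (hS.mem_nhds hp)).fderiv_right (m := 1) (by rw [one_add_one_eq_two]; exact aux_two_le))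
  have hDc : ∀ p ∈ S, ContinuousAt D p := fun p hp => by
    have : ContinuousAt (fderiv ℝ (fderiv ℝ f)) p :=
      ((hcd p hp).fderiv_right (m := 0) (by simp)).continuousAt
    exact (this.clm_apply continuousAt_const).clm_apply continuousAt_const
  have heq : ∀ s ∈ K, iteratedFDeriv ℝ 2 (fun z => f (z, s)) x ![e, e] = D (x, s) :=
    fun s hs => aux_d2 f S hS hf e x s (hx s hs)
  have hDs : ∀ s ∈ K, ContinuousAt (fun s => D (x, s)) s := fun s hs =>
    ContinuousAt.comp (f := fun s => (x, s)) (g := D) (hDc _ (hx s hs)) (by fun_prop)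
  refine ⟨ContinuousOn.congr (fun s hs => (hDs s hs).continuousWithinAt) heq, ?_⟩
  have hev : ∀ᶠ ρ : ℝ in nhds 0, ∀ s ∈ K, (x + ρ * e, s) ∈ S ∧ D (x, s) - κ < D (x + ρ * e, s) := by
    apply hK.eventually_forall_of_forall_eventually
    intro s hs
    have hm : ContinuousAt (fun q : ℝ × ℝ => ((x + q.1 * e, q.2) : ℂ × ℝ)) (0, s) := by fun_prop
    have hm0 : (fun q : ℝ × ℝ => ((x + q.1 * e, q.2) : ℂ × ℝ)) (0, s) = (x, s) := by simp
    have h1 : ∀ᶠ q : ℝ × ℝ in nhds (0, s), ((x + q.1 * e, q.2) : ℂ × ℝ) ∈ S :=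
      hm.eventually (hS.mem_nhds (by rw [hm0]; exact hx s hs))
    have h2 : ContinuousAt (fun q : ℝ × ℝ => D (x + q.1 * e, q.2)) (0, s) :=
      ContinuousAt.comp (g := D) (by have := hDc _ (hx s hs); rw [← hm0] at this; exact this) hm
    have h3 : ContinuousAt (fun q : ℝ × ℝ => D (x, q.2) - κ) (0, s) := by
      refine ContinuousAt.sub ?_ continuousAt_const
      exact ContinuousAt.comp (f := fun q : ℝ × ℝ => q.2) (g := fun s => D (x, s)) (hDs s hs) (by fun_prop)
    exact h1.and (h3.eventually_lt h2 (by simpa using hκ))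
  obtain ⟨r0, hr0, hr⟩ := Metric.eventually_nhds_iff.mp hev
  refine ⟨r0, hr0, fun r hrp hrr s hs => ?_⟩
  rw [heq s hs]
  have hr' : ∀ ρ : ℝ, |ρ| < r0 → (x + ρ * e, s) ∈ S ∧ D (x, s) - κ < D (x + ρ * e, s) :=
    fun ρ hρ => hr (by simpa using hρ) s hs
  set m := D (x, s) - κ
  set φ : ℝ → ℝ := fun ρ => f (x + ρ * e, s)
  set φ' : ℝ → ℝ := fun ρ => fderiv ℝ f (x + ρ * e, s) (e, 0)
  set φ'' : ℝ → ℝ := fun ρ => D (x + ρ * e, s)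
  have hl : ∀ ρ : ℝ, HasDerivAt (fun ρ : ℝ => ((x + ρ * e, s) : ℂ × ℝ)) (e, 0) ρ := fun ρ => by
    refine HasDerivAt.prodMk ?_ (hasDerivAt_const _ _)
    simpa using ((Complex.ofRealCLM.hasDerivAt (x := ρ)).mul_const e).const_add x
  have hφ : ∀ ρ : ℝ, |ρ| < r0 → HasDerivAt φ (φ' ρ) ρ := fun ρ hρ =>
    (hd _ (hr' ρ hρ).1).hasFDerivAt.comp_hasDerivAt ρ (hl ρ)
  have hφ' : ∀ ρ : ℝ, |ρ| < r0 → HasDerivAt φ' (φ'' ρ) ρ := fun ρ hρ => by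
    have h := ((hcd _ (hr' ρ hρ).1).differentiableAt (by simp)).hasFDerivAt.comp_hasDerivAt ρ (hl ρ)
    have := h.clm_apply (hasDerivAt_const ρ ((e, 0) : ℂ × ℝ))
    simpa [φ', φ'', hD] using this
  have hab : ∀ ρ ∈ Icc 0 r, |ρ| < r0 := fun ρ hρ => by rw [abs_of_nonneg hρ.1]; linarith [hρ.2]
  have hab' : ∀ ρ ∈ Icc 0 r, |-ρ| < r0 := fun ρ hρ => by rw [abs_neg]; exact hab ρ hρ
  have hψ1 : ∀ ρ ∈ Icc 0 r, HasDerivAt (fun ρ => φ ρ + φ (-ρ) - ρ ^ 2 * m) (φ' ρ - φ' (-ρ) - 2 * ρ * m) ρ := by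
    intro ρ hρ
    have h1 := (hφ ρ (hab ρ hρ))
    have h2 := (hφ (-ρ) (hab' ρ hρ)).comp ρ (hasDerivAt_neg ρ)
    have h3 := ((hasDerivAt_pow 2 ρ).mul_const m)
    exact ((h1.add h2).sub h3).congr_deriv (by simp; ring)
  have hψ2 : ∀ ρ ∈ Icc 0 r, HasDerivAt (fun ρ => φ' ρ - φ' (-ρ) - 2 * ρ * m) (φ'' ρ + φ'' (-ρ) - 2 * m) ρ := by
    intro ρ hρ
    have h1 := (hφ' ρ (hab ρ hρ))
    have h2 := (hφ' (-ρ) (hab' ρ hρ)).comp ρ (hasDerivAt_neg ρ)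
    have h3 := (((hasDerivAt_id ρ).const_mul 2).mul_const m)
    exact ((h1.sub h2).sub h3).congr_deriv (by simp)
  have hm1 : MonotoneOn (fun ρ => φ' ρ - φ' (-ρ) - 2 * ρ * m) (Icc 0 r) := by
    refine monotoneOn_of_hasDerivWithinAt_nonneg (f' := fun ρ => φ'' ρ + φ'' (-ρ) - 2 * m) (convex_Icc 0 r)
      (fun ρ hρ => (hψ2 ρ hρ).continuousAt.continuousWithinAt)
      (fun ρ hρ => (hψ2 ρ (interior_subset hρ)).hasDerivWithinAt) (fun ρ hρ => ?_)
    have hρ := interior_subset hρ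
    have h1 := (hr' ρ (hab ρ hρ)).2
    have h2 := (hr' (-ρ) (hab' ρ hρ)).2
    simp only [φ'']
    linarith
  have h0 : (0:ℝ) ∈ Icc 0 r := ⟨le_rfl, hrp.le⟩
  have hm2 : MonotoneOn (fun ρ => φ ρ + φ (-ρ) - ρ ^ 2 * m) (Icc 0 r) := by
    refine monotoneOn_of_hasDerivWithinAt_nonneg (f' := fun ρ => φ' ρ - φ' (-ρ) - 2 * ρ * m) (convex_Icc 0 r)
      (fun ρ hρ => (hψ1 ρ hρ).continuousAt.continuousWithinAt)
      (fun ρ hρ => (hψ1 ρ (interior_subset hρ)).hasDerivWithinAt) (fun ρ hρ => ?_)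
    have hρ := interior_subset hρ
    have := hm1 h0 hρ hρ.1
    simpa using this
  have := hm2 h0 ⟨hrp.le, le_rfl⟩ hrp.le
  simp [φ] at this
  rw [← sub_eq_add_neg] at this
  linarith

/-- parabolic comparison principle for 2D Ricci flow: on a bounded open set
`Ω ⊆ ℂ`, if `u₁, u₂` are continuous on `Ω̄ × [0,T]`, smooth solutions of
`∂u/∂t = e^{-2u}Δu` on `Ω × (0,T]`, and `u₁ ≤ u₂` on the parabolic boundary
`(Ω̄ × {0}) ∪ (∂Ω × [0,T])`, then `u₁ ≤ u₂` on `Ω̄ × [0,T]`. -/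
theorem stmt9 (Ω : Set ℂ) (hΩ : IsOpen Ω) (hΩbdd : Bornology.IsBounded Ω)
    (T : ℝ) (hT : 0 < T) (u₁ u₂ : ℂ → ℝ → ℝ)
    (hc₁ : ContinuousOn (fun p : ℂ × ℝ => u₁ p.1 p.2) (closure Ω ×ˢ Icc 0 T))
    (hc₂ : ContinuousOn (fun p : ℂ × ℝ => u₂ p.1 p.2) (closure Ω ×ˢ Icc 0 T))
    (hs₁ : ContDiffOn ℝ (⊤ : ℕ∞) (fun p : ℂ × ℝ => u₁ p.1 p.2) (Ω ×ˢ Ioc 0 T))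
    (hs₂ : ContDiffOn ℝ (⊤ : ℕ∞) (fun p : ℂ × ℝ => u₂ p.1 p.2) (Ω ×ˢ Ioc 0 T))
    (heq₁ : ∀ z ∈ Ω, ∀ t ∈ Ioc (0:ℝ) T,
      HasDerivWithinAt (u₁ z) (Real.exp (-2 * u₁ z t) * lap (fun w => u₁ w t) z) (Ioc 0 T) t)
    (heq₂ : ∀ z ∈ Ω, ∀ t ∈ Ioc (0:ℝ) T,
      HasDerivWithinAt (u₂ z) (Real.exp (-2 * u₂ z t) * lap (fun w => u₂ w t) z) (Ioc 0 T) t)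
    (hinit : ∀ z ∈ closure Ω, u₁ z 0 ≤ u₂ z 0)
    (hbdry : ∀ z ∈ frontier Ω, ∀ t ∈ Icc (0:ℝ) T, u₁ z t ≤ u₂ z t) :
    ∀ z ∈ closure Ω, ∀ t ∈ Icc (0:ℝ) T, u₁ z t ≤ u₂ z t := by
  have hcl : IsCompact (closure Ω) := hΩbdd.isCompact_closure
  have hKc : IsCompact (closure Ω ×ˢ Icc (0:ℝ) T) := hcl.prod isCompact_Icc
  have hwc : ContinuousOn (fun p : ℂ × ℝ => u₁ p.1 p.2 - u₂ p.1 p.2) (closure Ω ×ˢ Icc 0 T) :=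
    hc₁.sub hc₂
  have hsub : Ω ×ˢ Ioo 0 T ⊆ Ω ×ˢ Ioc 0 T := prod_mono_right Ioo_subset_Ioc_self
  have hSo : IsOpen (Ω ×ˢ Ioo (0:ℝ) T) := hΩ.prod isOpen_Ioo
  have hs1 := hs₁.mono hsub
  have hs2 := hs₂.mono hsub
  -- the key claim on the open cylinder
  have key : ∀ z ∈ Ω, ∀ t ∈ Ioo (0:ℝ) T, u₁ z t - u₂ z t ≤ 0 := by
    by_contra hcon
    push Not at hcon
    obtain ⟨z1, hz1, t1, ht1, hpos⟩ := hcon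
    obtain ⟨R, hR⟩ := hcl.isBounded.exists_norm_le
    set c : ℝ → ℝ := fun s => max 0 (min s T) with hcdef
    have hcc : Continuous c := by fun_prop
    have hcm : ∀ s, c s ∈ Icc 0 T := fun s => ⟨le_max_left _ _, max_le hT.le (min_le_right _ _)⟩
    have hce : ∀ s ∈ Icc 0 T, c s = s := fun s hs => by
      simp [hcdef, min_eq_left hs.2, max_eq_right hs.1]
    set W : ℂ → ℝ → ℝ := fun x s => max (u₁ x (c s) - u₂ x (c s)) 0 with hW
    have hWc : ContinuousOn (fun p : ℂ × ℝ => W p.1 p.2) (closure Ω ×ˢ univ) := by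
      have h1 : ContinuousOn (fun p : ℂ × ℝ => u₁ p.1 (c p.2) - u₂ p.1 (c p.2)) (closure Ω ×ˢ univ) :=
        hwc.comp (f := fun p : ℂ × ℝ => (p.1, c p.2)) (by fun_prop) (fun p hp => ⟨hp.1, hcm _⟩)
      exact ContinuousOn.sup h1 continuousOn_const
    have hWs : ∀ x ∈ closure Ω, Continuous (W x) := fun x hx => by
      rw [← continuousOn_univ]
      exact hWc.comp (f := fun s : ℝ => (x, s)) (by fun_prop) (fun s _ => ⟨hx, mem_univ _⟩)
    have hW0 : ∀ x s, 0 ≤ W x s := fun x s => le_max_right _ _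
    obtain ⟨b, hb1, hb2⟩ := exists_between ht1.2
    obtain ⟨a0, ha1, ha2⟩ := exists_between ht1.1
    have hii : ∀ x ∈ closure Ω, ∀ p q, IntervalIntegrable (W x) MeasureTheory.volume p q :=
      fun x hx p q => (hWs x hx).intervalIntegrable p q
    have hz1c := subset_closure hz1
    have hq : 0 < ∫ s in a0..b, W z1 s := by
      refine intervalIntegral.integral_pos (by linarith) (hWs z1 hz1c).continuousOn
        (fun s _ => hW0 _ _) ⟨t1, ⟨ha2.le, hb1.le⟩, ?_⟩
      simp only [hW]
      rw [hce t1 ⟨ht1.1.le, ht1.2.le⟩]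
      exact lt_max_of_lt_left hpos
    set q := ∫ s in a0..b, W z1 s with hqdef
    obtain ⟨η, hη, hηR⟩ : ∃ η > 0, η * R ^ 2 < q := by
      refine ⟨q / (R ^ 2 + 1), by positivity, ?_⟩
      rw [div_mul_eq_mul_div, div_lt_iff₀ (by positivity)]
      nlinarith
    -- choose the starting time
    have hVc : ContinuousOn (fun p : ℂ × ℝ => Real.exp (2 * u₁ p.1 p.2) - Real.exp (2 * u₂ p.1 p.2))
        (closure Ω ×ˢ Icc 0 T) :=
      (Real.continuous_exp.comp_continuousOn (hc₁.const_mul 2)).sub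
        (Real.continuous_exp.comp_continuousOn (hc₂.const_mul 2))
    obtain ⟨δ, hδ, hδV⟩ := Metric.uniformContinuousOn_iff.mp
      (hKc.uniformContinuousOn_of_continuous hVc) η hη
    obtain ⟨a, ha, haa⟩ : ∃ a, 0 < a ∧ a < min δ a0 := exists_between (lt_min hδ ha1)
    have haδ := haa.trans_le (min_le_left _ _)
    have haa0 := haa.trans_le (min_le_right _ _)
    have hab : a < b := by linarith
    have hVa : ∀ x ∈ closure Ω, Real.exp (2 * u₁ x a) - Real.exp (2 * u₂ x a) ≤ η := fun x hx => by
      have h1 := hδV (x, a) ⟨hx, ha.le, by linarith⟩ (x, 0) ⟨hx, le_rfl, hT.le⟩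
        (by simpa [Prod.dist_eq, abs_of_pos ha] using And.intro hδ haδ)
      have h2 : Real.exp (2 * u₁ x 0) ≤ Real.exp (2 * u₂ x 0) :=
        Real.exp_le_exp.mpr (by linarith [hinit x hx])
      rw [Real.dist_eq] at h1
      have := (abs_lt.mp h1).2
      simp only at this
      linarith
    set Q : ℂ → ℝ := fun x => ∫ s in a..b, W x s with hQ
    have hQc : ContinuousOn Q (closure Ω) := by
      rw [continuousOn_iff_continuous_domRestrict]
      refine intervalIntegral.continuous_parametric_intervalIntegral_of_continuous'
        (f := fun (x : closure Ω) s => W x s) ?_ a b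
      exact hWc.comp_continuous (f := fun p : closure Ω × ℝ => ((p.1 : ℂ), p.2)) (by fun_prop)
        (fun p => ⟨p.1.2, mem_univ _⟩)
    have hQz : q ≤ Q z1 := by
      have := intervalIntegral.integral_add_adjacent_intervals (hii z1 hz1c a a0) (hii z1 hz1c a0 b)
      have h0 : 0 ≤ ∫ s in a..a0, W z1 s :=
        intervalIntegral.integral_nonneg haa0.le (fun s _ => hW0 _ _)
      simp only [hQ]
      linarith
    obtain ⟨x0, hx0, hmax⟩ := hcl.exists_isMaxOn ⟨z1, hz1c⟩
      (f := fun x => Q x + η * ‖x‖ ^ 2) (hQc.add (by fun_prop))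
    have hmax' : ∀ x ∈ closure Ω, Q x + η * ‖x‖ ^ 2 ≤ Q x0 + η * ‖x0‖ ^ 2 := fun x hx => hmax hx
    have hIcc : ∀ s ∈ Icc a b, s ∈ Ioo 0 T := fun s hs => ⟨by linarith [hs.1], by linarith [hs.2]⟩
    have hWe : ∀ x, ∀ s ∈ Icc a b, W x s = max (u₁ x s - u₂ x s) 0 := fun x s hs => by
      simp only [hW]; rw [hce s (Ioo_subset_Icc_self (hIcc s hs))]
    have hx0Ω : x0 ∈ Ω := by
      by_contra hn
      have hfr : x0 ∈ frontier Ω := by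
        rw [frontier, hΩ.interior_eq]; exact ⟨hx0, hn⟩
      have hQ0 : Q x0 = 0 := by
        simp only [hQ]
        rw [intervalIntegral.integral_congr (g := fun _ => (0:ℝ))]
        · simp
        · intro s hs
          rw [uIcc_of_le hab.le] at hs
          simp only [hWe x0 s hs]
          exact max_eq_right (by linarith [hbdry x0 hfr s (Ioo_subset_Icc_self (hIcc s hs))])
      have h1 := hmax' z1 hz1c
      have h2 : ‖x0‖ ^ 2 ≤ R ^ 2 := by
        have := hR x0 hx0
        gcongr
      have h3 : 0 ≤ η * ‖z1‖ ^ 2 := by positivity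
      have h4 : η * ‖x0‖ ^ 2 ≤ η * R ^ 2 := by gcongr
      linarith
    -- second differences
    set f : ℂ × ℝ → ℝ := fun p => u₁ p.1 p.2 - u₂ p.1 p.2 with hf
    have hfs : ContDiffOn ℝ (⊤ : ℕ∞) f (Ω ×ˢ Ioo 0 T) := hs1.sub hs2
    set κ := η / (b - a) with hκdef
    have hκ : 0 < κ := div_pos hη (by linarith)
    set E : ℂ → ℝ → ℝ := fun e s => iteratedFDeriv ℝ 2 (fun z => f (z, s)) x0 ![e, e] with hE
    have hxs : ∀ s ∈ Icc a b, (x0, s) ∈ Ω ×ˢ Ioo 0 T := fun s hs => ⟨hx0Ω, hIcc s hs⟩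
    have hEc : ∀ e, ContinuousOn (E e) (Icc a b) := fun e =>
      (aux_sd f _ hSo hfs e x0 (Icc a b) isCompact_Icc hxs κ hκ).1
    have hfx : ContinuousOn (fun s => f (x0, s)) (Icc a b) :=
      hwc.comp (f := fun s : ℝ => (x0, s)) (by fun_prop)
        (fun s hs => ⟨hx0, Ioo_subset_Icc_self (hIcc s hs)⟩)
    have hint : ∀ g : ℝ → ℝ, ContinuousOn g (Icc a b) →
        IntervalIntegrable (fun s => if 0 < f (x0, s) then g s else 0) MeasureTheory.volume a b := by
      intro g hg
      have hgi : IntervalIntegrable g MeasureTheory.volume a b := by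
        apply ContinuousOn.intervalIntegrable; rwa [uIcc_of_le hab.le]
      rw [intervalIntegrable_iff_integrableOn_Ioo_of_le hab.le] at hgi ⊢
      have hm : MeasurableSet (Ioo a b ∩ {s | 0 < f (x0, s)}) :=
        ((hfx.mono Ioo_subset_Icc_self).isOpen_inter_preimage isOpen_Ioo isOpen_Ioi).measurableSet
      refine (hgi.indicator hm).congr_fun (fun s hs => ?_) measurableSet_Ioo
      by_cases h : 0 < f (x0, s)
      · simp [indicator, h, hs.1, hs.2]
      · simp [indicator, h]
    have hdir : ∀ e : ℂ, ‖e‖ = 1 →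
        ∫ s in a..b, (if 0 < f (x0, s) then E e s else 0) ≤ -η := by
      intro e he
      obtain ⟨r0, hr0, hr⟩ := (aux_sd f _ hSo hfs e x0 (Icc a b) isCompact_Icc hxs κ hκ).2
      obtain ⟨ε, hε, hball⟩ := Metric.isOpen_iff.mp hΩ x0 hx0Ω
      obtain ⟨r, hrp, hrm⟩ : ∃ r, 0 < r ∧ r < min r0 ε := exists_between (lt_min hr0 hε)
      have hrr := hrm.trans_le (min_le_left _ _)
      have hre := hrm.trans_le (min_le_right _ _)
      have hp : x0 + r * e ∈ closure Ω := subset_closure (hball (by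
        simpa [dist_eq_norm, he, abs_of_pos hrp] using hre))
      have hn : x0 - r * e ∈ closure Ω := subset_closure (hball (by
        simpa [dist_eq_norm, he, abs_of_pos hrp] using hre))
      have h1 := hmax' _ hp
      have h2 := hmax' _ hn
      have hpar : ‖x0 + r * e‖ ^ 2 + ‖x0 - r * e‖ ^ 2 = 2 * ‖x0‖ ^ 2 + 2 * r ^ 2 := by
        have := parallelogram_law_with_norm ℝ x0 (r * e)
        rw [norm_mul, he, Complex.norm_real, Real.norm_eq_abs, mul_one, sq_abs] at this
        nlinarith
      have h3 : Q (x0 + r * e) + Q (x0 - r * e) - 2 * Q x0 ≤ -2 * η * r ^ 2 := by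
        have h4 : η * (‖x0 + r * e‖ ^ 2 + ‖x0 - r * e‖ ^ 2) = η * (2 * ‖x0‖ ^ 2 + 2 * r ^ 2) := by
          rw [hpar]
        linarith
      have h4 : Q (x0 + r * e) + Q (x0 - r * e) - 2 * Q x0 =
          ∫ s in a..b, (W (x0 + r * e) s + W (x0 - r * e) s - 2 * W x0 s) := by
        rw [intervalIntegral.integral_sub ((hii _ hp a b).add (hii _ hn a b))
          ((hii _ hx0 a b).const_mul 2), intervalIntegral.integral_add (hii _ hp a b) (hii _ hn a b),
          intervalIntegral.integral_const_mul]
      have hm : ∫ s in a..b, (r ^ 2 * ((if 0 < f (x0, s) then E e s else 0) - κ)) ≤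
          ∫ s in a..b, (W (x0 + r * e) s + W (x0 - r * e) s - 2 * W x0 s) := by
        refine intervalIntegral.integral_mono_on hab.le
          (((hint _ (hEc e)).sub (by simp)).const_mul _)
          (((hii _ hp a b).add (hii _ hn a b)).sub ((hii _ hx0 a b).const_mul 2)) (fun s hs => ?_)
        rw [hWe _ s hs, hWe _ s hs, hWe _ s hs]
        have h5 := hr r hrp hrr s hs
        simp only [hf] at h5 ⊢
        have m1 := le_max_left (u₁ (x0 + r * e) s - u₂ (x0 + r * e) s) 0
        have m2 := le_max_left (u₁ (x0 - r * e) s - u₂ (x0 - r * e) s) 0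
        have m3 := le_max_right (u₁ (x0 + r * e) s - u₂ (x0 + r * e) s) 0
        have m4 := le_max_right (u₁ (x0 - r * e) s - u₂ (x0 - r * e) s) 0
        split_ifs with h
        · rw [max_eq_left h.le]
          simp only [hE, hf]
          linarith
        · rw [max_eq_right (not_lt.mp h)]
          have : 0 < r ^ 2 * κ := by positivity
          linarith
      rw [intervalIntegral.integral_const_mul, intervalIntegral.integral_sub (hint _ (hEc e)) (by simp),
        intervalIntegral.integral_const, smul_eq_mul] at hm
      have hk : (b - a) * κ = η := by
        rw [hκdef]; field_simp [(by linarith : b - a ≠ 0)]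
      rw [hk] at hm
      have hr2 : 0 < r ^ 2 := by positivity
      have h6 : r ^ 2 * ((∫ s in a..b, (if 0 < f (x0, s) then E e s else 0)) - η) ≤ r ^ 2 * (-2 * η) := by
        linarith
      have h7 := le_of_mul_le_mul_left h6 hr2
      linarith
    have hA := hdir 1 (by simp)
    have hB := hdir I (by simp)
    -- the time derivative
    have hlap : ∀ s ∈ Icc a b, lap (fun w => u₁ w s) x0 - lap (fun w => u₂ w s) x0 = E 1 s + E I s := by
      intro s hs
      have e1 : ∀ e : ℂ, E e s = iteratedFDeriv ℝ 2 (fun w => u₁ w s) x0 ![e, e]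
          - iteratedFDeriv ℝ 2 (fun w => u₂ w s) x0 ![e, e] := by
        intro e
        have hl : ContDiffAt ℝ 2 (fun z : ℂ => (z, s)) x0 := by fun_prop
        have c1 : ContDiffAt ℝ 2 (fun w => u₁ w s) x0 :=
          ContDiffAt.comp x0 (g := fun p : ℂ × ℝ => u₁ p.1 p.2) (f := fun z : ℂ => (z, s))
            ((hs1.contDiffAt (hSo.mem_nhds (hxs s hs))).of_le
              aux_two_le) hl
        have c2 : ContDiffAt ℝ 2 (fun w => u₂ w s) x0 :=
          ContDiffAt.comp x0 (g := fun p : ℂ × ℝ => u₂ p.1 p.2) (f := fun z : ℂ => (z, s))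
            ((hs2.contDiffAt (hSo.mem_nhds (hxs s hs))).of_le
              aux_two_le) hl
        have := iteratedFDeriv_sub_apply (i := 2) (x := x0) c1 c2
        simp only [hE, hf]
        have h9 := congrArg (fun L => L ![e, e]) this
        simpa [Pi.sub_def] using h9
      rw [e1, e1]; simp only [lap]; ring
    have hder : ∀ (u : ℂ → ℝ → ℝ), (∀ z ∈ Ω, ∀ t ∈ Ioc (0:ℝ) T,
        HasDerivWithinAt (u z) (Real.exp (-2 * u z t) * lap (fun w => u w t) z) (Ioc 0 T) t) →
        ∀ s ∈ Icc a b, HasDerivAt (fun s => Real.exp (2 * u x0 s)) (2 * lap (fun w => u w s) x0) s := by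
      intro u hu s hs
      have hs' := hIcc s hs
      have h1 := (hu x0 hx0Ω s (Ioo_subset_Ioc_self hs')).hasDerivAt
        (Filter.mem_of_superset (isOpen_Ioo.mem_nhds hs') Ioo_subset_Ioc_self)
      refine (h1.const_mul 2).exp.congr_deriv ?_
      have : Real.exp (2 * u x0 s) * Real.exp (-2 * u x0 s) = 1 := by
        rw [← Real.exp_add]; simp
      linear_combination (2 * lap (fun w => u w s) x0) * this
    have hftc := aux_ftc (fun s => Real.exp (2 * u₁ x0 s) - Real.exp (2 * u₂ x0 s))
      (fun s => 2 * (E 1 s + E I s)) a b hab.le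
      (fun s hs => ((hder u₁ heq₁ s hs).sub (hder u₂ heq₂ s hs)).congr_deriv (by
        rw [← hlap s hs]; ring)) (((hEc 1).add (hEc I)).const_mul 2)
    have hma : max (Real.exp (2 * u₁ x0 a) - Real.exp (2 * u₂ x0 a)) 0 ≤ η := max_le (hVa x0 hx0) hη.le
    have hfin : (∫ s in a..b, (if 0 < Real.exp (2 * u₁ x0 s) - Real.exp (2 * u₂ x0 s)
        then 2 * (E 1 s + E I s) else 0)) =
        2 * ((∫ s in a..b, (if 0 < f (x0, s) then E 1 s else 0)) +
          ∫ s in a..b, (if 0 < f (x0, s) then E I s else 0)) := by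
      rw [← intervalIntegral.integral_add (hint _ (hEc 1)) (hint _ (hEc I)),
        ← intervalIntegral.integral_const_mul]
      congr 1
      ext s
      have hiff : 0 < Real.exp (2 * u₁ x0 s) - Real.exp (2 * u₂ x0 s) ↔ 0 < f (x0, s) := by
        rw [sub_pos, Real.exp_lt_exp]
        simp only [hf]
        constructor <;> intro h <;> linarith
      by_cases h : 0 < f (x0, s)
      · simp only [if_pos h, if_pos (hiff.mpr h)]
      · simp only [if_neg h, if_neg (mt hiff.mp h)]; ring
    rw [hfin] at hftc
    linarith
  intro z hz t ht
  by_cases hzΩ : z ∈ Ω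
  · have hcz : ContinuousOn (fun s => u₁ z s - u₂ z s) (closure (Ioo 0 T)) := by
      rw [closure_Ioo hT.ne]
      exact hwc.comp (f := fun s : ℝ => (z, s)) (by fun_prop) (fun s hs => ⟨hz, hs⟩)
    have := le_on_closure (fun s hs => key z hzΩ s hs) hcz continuousOn_const
      (by rw [closure_Ioo hT.ne]; exact ht)
    linarith
  · exact hbdry z (by rw [frontier, hΩ.interior_eq]; exact ⟨hz, hzΩ⟩) t ht
end

section
/- Let ε > 0, M ∈ ℝ, t₀ > 0, and let u be smooth on a neighbourhood of D̄_ε × (0,t₀), satisfying ∂u/∂t = e^{−2u}Δu there, with u ≥ M + 1 on ∂D_ε × (0,t₀). Suppose in addition that ∫_{D_ε} (M − u(z,t))₊ dz → 0 as t ↓ 0, where x₊ = max{x,0}. Then u(z,t) ≥ M for all z ∈ D_ε and all t ∈ (0,t₀). -/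
open Complex Metric Set Filter

open MeasureTheory in
/-- integral of a directional derivative of a compactly supported function -/
lemma aux_int_zero (F : ℂ → ℝ) (F' : ℂ → ℂ →L[ℝ] ℝ) (a : ℂ)
    (hF : Integrable F) (hF' : Integrable (fun x => F' x a))
    (h : ∀ x, HasFDerivAt F (F' x) x) : ∫ x, F' x a = 0 := by
  have := integral_bilinear_hasFDerivAt_right_eq_neg_left_of_integrable
    (μ := (volume : Measure ℂ)) (f := F) (f' := F') (g := fun _ => (1:ℝ)) (g' := fun _ => 0)
    (v := a) (B := ContinuousLinearMap.mul ℝ ℝ) (by simpa using hF') (by simp) (by simpa using hF)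
    (fun x _ => h x) (fun x _ => hasFDerivAt_const _ _)
  simpa using this

lemma aux_max (k k' : ℝ → ℝ) (hk : ∀ x, HasDerivAt k (k' x) x) (h0 : k 0 = 0) (h0' : k' 0 = 0)
    (x : ℝ) : HasDerivAt (fun y => k (max y 0)) (k' (max x 0)) x := by
  rcases lt_trichotomy x 0 with h | h | h
  · rw [max_eq_right h.le, h0']
    refine (hasDerivAt_const x (0:ℝ)).congr_of_eventuallyEq ?_
    filter_upwards [Iio_mem_nhds h] with y hy
    rw [max_eq_right (le_of_lt hy), h0]
  · subst h
    rw [max_self, h0']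
    have h1 : HasDerivWithinAt (fun y => k (max y 0)) 0 (Iic 0) 0 := by
      refine (hasDerivWithinAt_const (0:ℝ) (Iic 0) (0:ℝ)).congr (fun y hy => ?_) (by simp [h0])
      rw [max_eq_right hy, h0]
    have h2 : HasDerivWithinAt (fun y => k (max y 0)) 0 (Ici 0) 0 := by
      have := (hk 0).hasDerivWithinAt (s := Ici 0)
      rw [h0'] at this
      refine this.congr (fun y hy => ?_) (by simp)
      rw [max_eq_left hy]
    have := h1.union h2
    rwa [Iic_union_Ici, hasDerivWithinAt_univ] at this
  · rw [max_eq_left h.le]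
    refine (hk x).congr_of_eventuallyEq ?_
    filter_upwards [Ioi_mem_nhds h] with y hy
    rw [max_eq_left (le_of_lt hy)]

open MeasureTheory in
lemma aux_dir (ε M : ℝ) (v : ℂ → ℝ) (V : Set ℂ) (hV : IsOpen V)
    (hVs : closedBall (0:ℂ) ε ⊆ V) (hv : ContDiffOn ℝ 2 v V)
    (hb : ∀ z ∈ sphere (0:ℂ) ε, M + 1 ≤ v z)
    (ψ ψ' : ℝ → ℝ) (hψ : ∀ s, HasDerivAt ψ (ψ' s) s) (hψ'c : Continuous ψ')
    (hψ'0 : ∀ s, 0 ≤ ψ' s) (hψ0 : ∀ s, M ≤ s → ψ s = 0) (a : ℂ) :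
    IntegrableOn (fun z => ψ (v z) * fderiv ℝ (fderiv ℝ v) z a a) (ball 0 ε) ∧
    ∫ z in ball (0:ℂ) ε, ψ (v z) * fderiv ℝ (fderiv ℝ v) z a a ≤ 0 := by
  have hψc : Continuous ψ := continuous_iff_continuousAt.2 fun s => (hψ s).continuousAt
  have hvc : ContinuousOn v V := hv.continuousOn
  have hd1 : ContDiffOn ℝ 1 (fderiv ℝ v) V := hv.fderiv_of_isOpen hV (by norm_num)
  have hd2 : ContinuousOn (fderiv ℝ (fderiv ℝ v)) V :=
    hd1.continuousOn_fderiv_of_isOpen hV (by norm_num)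
  have hd1c := hd1.continuousOn
  have hint : ∀ f : ℂ → ℝ, ContinuousOn f V → IntegrableOn f (ball 0 ε) := fun f hf =>
    ((hf.mono hVs).integrableOn_compact (isCompact_closedBall _ _)).mono_set ball_subset_closedBall
  have c1 : ContinuousOn (fun z => ψ (v z) * fderiv ℝ (fderiv ℝ v) z a a) V :=
    (hψc.comp_continuousOn hvc).mul ((hd2.clm_apply continuousOn_const).clm_apply continuousOn_const)
  have c2 : ContinuousOn (fun z => ψ' (v z) * (fderiv ℝ v z a) ^ 2) V :=
    (hψ'c.comp_continuousOn hvc).mul ((hd1c.clm_apply continuousOn_const).pow 2)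
  have c3 : ContinuousOn (fun z => ψ (v z) * fderiv ℝ v z a) V :=
    (hψc.comp_continuousOn hvc).mul (hd1c.clm_apply continuousOn_const)
  refine ⟨hint _ c1, ?_⟩
  classical
  let G : ℂ → ℂ →L[ℝ] ℝ := fun z => ψ (v z) • ((fderiv ℝ (fderiv ℝ v) z).flip a)
    + (fderiv ℝ v z a) • (ψ' (v z) • fderiv ℝ v z)
  have key := aux_int_zero ((ball (0:ℂ) ε).indicator (fun z => ψ (v z) * fderiv ℝ v z a))
    ((ball (0:ℂ) ε).indicator G) a ((integrable_indicator_iff measurableSet_ball).2 (hint _ c3))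
  have e : (fun x => ((ball (0:ℂ) ε).indicator G) x a) = (ball (0:ℂ) ε).indicator
      (fun z => ψ (v z) * fderiv ℝ (fderiv ℝ v) z a a + ψ' (v z) * (fderiv ℝ v z a) ^ 2) := by
    funext x
    by_cases hx : x ∈ ball (0:ℂ) ε
    · simp only [indicator_of_mem hx, G]
      simp
      ring
    · simp only [indicator_of_notMem hx]
      simp
  rw [e] at key
  have key2 := key ((integrable_indicator_iff measurableSet_ball).2 (hint _ (c1.add c2))) ?_
  · rw [integral_indicator measurableSet_ball, integral_add (hint _ c1) (hint _ c2)] at key2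
    have : 0 ≤ ∫ z in ball (0:ℂ) ε, ψ' (v z) * (fderiv ℝ v z a) ^ 2 :=
      integral_nonneg fun z => mul_nonneg (hψ'0 _) (sq_nonneg _)
    linarith
  · intro z
    by_cases hz : z ∈ ball (0:ℂ) ε
    · rw [indicator_of_mem hz]
      have hzV : V ∈ nhds z := hV.mem_nhds (hVs (ball_subset_closedBall hz))
      have h1 : HasFDerivAt v (fderiv ℝ v z) z :=
        ((hv.contDiffAt hzV).differentiableAt (by norm_num)).hasFDerivAt
      have h2 : HasFDerivAt (fderiv ℝ v) (fderiv ℝ (fderiv ℝ v) z) z :=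
        ((hd1.contDiffAt hzV).differentiableAt (by norm_num)).hasFDerivAt
      have h3 : HasFDerivAt (fun z => fderiv ℝ v z a) ((fderiv ℝ (fderiv ℝ v) z).flip a) z := by
        have := h2.clm_apply (hasFDerivAt_const a z)
        simpa using this
      have h4 : HasFDerivAt (fun z => ψ (v z)) (ψ' (v z) • fderiv ℝ v z) z :=
        (hψ (v z)).comp_hasFDerivAt z h1
      refine (h4.mul h3).congr_of_eventuallyEq ?_
      filter_upwards [isOpen_ball.mem_nhds hz] with w hw
      rw [indicator_of_mem hw]
      rfl
    · rw [indicator_of_notMem hz]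
      have hK : IsClosed (closedBall (0:ℂ) ε ∩ v ⁻¹' Iic M) :=
        (hvc.mono hVs).preimage_isClosed_of_isClosed isClosed_closedBall isClosed_Iic
      have hzK : z ∈ (closedBall (0:ℂ) ε ∩ v ⁻¹' Iic M)ᶜ := by
        rintro ⟨h1, h2⟩
        have : z ∈ sphere (0:ℂ) ε := by
          simp only [mem_ball, mem_closedBall, mem_sphere, not_lt] at *
          exact le_antisymm h1 hz
        have := hb z this
        simp only [mem_preimage, mem_Iic] at h2
        linarith
      refine (hasFDerivAt_const (0:ℝ) z).congr_of_eventuallyEq ?_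
      filter_upwards [hK.isOpen_compl.mem_nhds hzK] with w hw
      by_cases hwb : w ∈ ball (0:ℂ) ε
      · rw [indicator_of_mem hwb, hψ0, zero_mul]
        by_contra hcon
        exact hw ⟨ball_subset_closedBall hwb, (not_le.1 hcon).le⟩
      · rw [indicator_of_notMem hwb]

open MeasureTheory in
theorem stmt15 (ε : ℝ) (hε : 0 < ε) (M t₀ : ℝ) (ht₀ : 0 < t₀)
    (u : ℂ → ℝ → ℝ) (U : Set (ℂ × ℝ)) (hU : IsOpen U)
    (hUsub : closedBall (0:ℂ) ε ×ˢ Ioo (0:ℝ) t₀ ⊆ U)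
    (hu : ContDiffOn ℝ (⊤ : ℕ∞) (fun p : ℂ × ℝ => u p.1 p.2) U)
    (heq : ∀ z ∈ closedBall (0:ℂ) ε, ∀ t ∈ Ioo (0:ℝ) t₀,
      HasDerivAt (u z) (Real.exp (-2 * u z t) * lap (fun w => u w t) z) t)
    (hbdry : ∀ z ∈ sphere (0:ℂ) ε, ∀ t ∈ Ioo (0:ℝ) t₀, M + 1 ≤ u z t)
    (hL1 : Tendsto (fun t => ∫ z in ball (0:ℂ) ε, max (M - u z t) 0)
      (nhdsWithin 0 (Ioi 0)) (nhds 0)) :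
    ∀ z ∈ ball (0:ℂ) ε, ∀ t ∈ Ioo (0:ℝ) t₀, M ≤ u z t := by
  -- profile functions
  set φ : ℝ → ℝ := fun s => max (M - s) 0 - Real.arctan (max (M - s) 0) with hφdef
  set k : ℝ → ℝ := fun x => x ^ 2 / (1 + x ^ 2) with hk
  set k' : ℝ → ℝ := fun x => 2 * x / (1 + x ^ 2) ^ 2 with hk'
  have hpos : ∀ x : ℝ, 0 < 1 + x ^ 2 := fun x => by positivity
  have hne : ∀ x : ℝ, 1 + x ^ 2 ≠ 0 := fun x => (hpos x).ne'
  have hkd : ∀ x, HasDerivAt k (k' x) x := by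
    intro x
    have h1 : HasDerivAt (fun x : ℝ => x ^ 2) (2 * x) x := by simpa using hasDerivAt_pow 2 x
    have := h1.div (h1.const_add 1) (hne x)
    refine this.congr_deriv ?_
    simp only [hk']
    congr 1
    ring
  have hsub : ∀ s : ℝ, HasDerivAt (fun s => M - s) (-1) s := fun s => by
    simpa using (hasDerivAt_id s).const_sub M
  have hφ : ∀ s, HasDerivAt φ (-k (max (M - s) 0)) s := by
    intro s
    have h := aux_max (fun x => x - Real.arctan x) k (fun x => by
      have := (hasDerivAt_id x).sub (Real.hasDerivAt_arctan x)
      refine this.congr_deriv ?_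
      simp only [hk]
      have := hne x
      field_simp
      ring) (by simp) (by simp [hk]) (M - s)
    have := h.comp s (hsub s)
    refine this.congr_deriv (by ring)
  have hkm : ∀ s, HasDerivAt (fun s => k (max (M - s) 0)) (-k' (max (M - s) 0)) s := by
    intro s
    have := (aux_max k k' hkd (by simp [hk]) (by simp [hk']) (M - s)).comp s (hsub s)
    refine this.congr_deriv (by ring)
  have hkc : Continuous k := by
    simp only [hk]; exact Continuous.div (by fun_prop) (by fun_prop) hne
  have hk'c : Continuous k' := by
    simp only [hk']; exact Continuous.div (by fun_prop) (by fun_prop) (fun x => pow_ne_zero 2 (hne x))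
  set ψ : ℝ → ℝ := fun s => -k (max (M - s) 0) * Real.exp (-2 * s) with hψdef
  set ψ' : ℝ → ℝ := fun s => k' (max (M - s) 0) * Real.exp (-2 * s)
    + 2 * k (max (M - s) 0) * Real.exp (-2 * s) with hψ'def
  have hψ : ∀ s, HasDerivAt ψ (ψ' s) s := by
    intro s
    have h1 : HasDerivAt (fun s => Real.exp (-2 * s)) (Real.exp (-2 * s) * (-2)) s := by
      simpa using ((hasDerivAt_id s).const_mul (-2)).exp
    refine ((hkm s).neg.mul h1).congr_deriv ?_
    simp only [hψ'def, Pi.neg_apply]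
    ring
  have hψ'c : Continuous ψ' := by
    simp only [hψ'def]; fun_prop
  have hψ'0 : ∀ s, 0 ≤ ψ' s := by
    intro s
    have : 0 ≤ max (M - s) 0 := le_max_right _ _
    simp only [hψ'def, hk, hk']
    positivity
  have hψ0 : ∀ s, M ≤ s → ψ s = 0 := by
    intro s hs
    simp [hψdef, hk, max_eq_right (sub_nonpos.2 hs)]
  have hφc : Continuous φ := continuous_iff_continuousAt.2 fun s => (hφ s).continuousAt
  have hφ'c : Continuous (fun s => -k (max (M - s) 0)) := by fun_prop
  -- x - arctan x is positive for x > 0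
  have hat : ∀ x : ℝ, 0 < x → Real.arctan x < x := by
    intro x hx
    by_cases h : Real.arctan x < x
    · exact h
    · have h1 := Real.lt_tan (Real.arctan_pos.2 hx) (Real.arctan_lt_pi_div_two x)
      rwa [Real.tan_arctan] at h1
  have hφle : ∀ s, φ s ≤ max (M - s) 0 := by
    intro s
    have : 0 ≤ Real.arctan (max (M - s) 0) := Real.arctan_nonneg.2 (le_max_right _ _)
    simp only [hφdef]; linarith
  have hφnn : ∀ s, 0 ≤ φ s := by
    intro s
    simp only [hφdef]
    rcases (le_max_right (M - s) 0).eq_or_lt with h | h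
    · rw [← h]; simp
    · have := hat _ h; linarith
  -- slices
  have huc : ContinuousOn (fun p : ℂ × ℝ => u p.1 p.2) U := hu.continuousOn
  have hslice : ∀ t, IsOpen {z : ℂ | (z, t) ∈ U} := fun t => hU.preimage (by fun_prop)
  have hsliceS : ∀ t ∈ Ioo (0:ℝ) t₀, closedBall (0:ℂ) ε ⊆ {z : ℂ | (z, t) ∈ U} :=
    fun t ht z hz => hUsub ⟨hz, ht⟩
  have hsm : ∀ t, ContDiffOn ℝ 2 (fun z => u z t) {z : ℂ | (z, t) ∈ U} := by
    intro t
    have : ContDiffOn ℝ 2 (fun p : ℂ × ℝ => u p.1 p.2) U := hu.of_le (WithTop.coe_le_coe.2 (le_top : (2:ℕ∞) ≤ ⊤))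
    exact this.comp (f := fun z : ℂ => (z, t)) (by fun_prop) (fun z hz => hz)
  have hsc : ∀ t ∈ Ioo (0:ℝ) t₀, ContinuousOn (fun z => u z t) (closedBall 0 ε) :=
    fun t ht => (hsm t).continuousOn.mono (hsliceS t ht)
  have hint : ∀ f : ℂ → ℝ, ContinuousOn f (closedBall 0 ε) → IntegrableOn f (ball 0 ε) :=
    fun f hf => (hf.integrableOn_compact (isCompact_closedBall _ _)).mono_set
      ball_subset_closedBall
  -- space inequality
  have hspace : ∀ t ∈ Ioo (0:ℝ) t₀,
      ∫ z in ball (0:ℂ) ε, ψ (u z t) * lap (fun w => u w t) z ≤ 0 := by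
    intro t ht
    have A := fun a => aux_dir ε M (fun z => u z t) _ (hslice t) (hsliceS t ht) (hsm t)
      (fun z hz => hbdry z hz t ht) ψ ψ' hψ hψ'c hψ'0 hψ0 a
    have e : ∀ z, ψ (u z t) * lap (fun w => u w t) z =
        ψ (u z t) * fderiv ℝ (fderiv ℝ (fun z => u z t)) z 1 1 +
        ψ (u z t) * fderiv ℝ (fderiv ℝ (fun z => u z t)) z Complex.I Complex.I := by
      intro z
      simp only [lap, iteratedFDeriv_two_apply]
      simp
      ring
    simp only [e]
    rw [integral_add (A 1).1 (A Complex.I).1]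
    linarith [(A 1).2, (A Complex.I).2]
  -- time derivative
  set T : ℂ × ℝ → ℝ := fun p => fderiv ℝ (fun p : ℂ × ℝ => u p.1 p.2) p (0, 1) with hT
  have hTc : ContinuousOn T U :=
    (hu.continuousOn_fderiv_of_isOpen hU (by exact_mod_cast le_top)).clm_apply continuousOn_const
  have hTd : ∀ z ∈ closedBall (0:ℂ) ε, ∀ t ∈ Ioo (0:ℝ) t₀, HasDerivAt (u z) (T (z, t)) t := by
    intro z hz t ht
    have h1 : HasFDerivAt (fun p : ℂ × ℝ => u p.1 p.2) _ (z, t) :=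
      ((hu.contDiffAt (hU.mem_nhds (hUsub ⟨hz, ht⟩))).differentiableAt (by simp)).hasFDerivAt
    have h2 : HasDerivAt (fun s : ℝ => (z, s)) ((0:ℂ), (1:ℝ)) t :=
      (hasDerivAt_const t z).prodMk (hasDerivAt_id t)
    exact h1.comp_hasDerivAt t h2
  have hDc : ContinuousOn (fun p : ℂ × ℝ => -k (max (M - u p.1 p.2) 0) * T p) U :=
    (hφ'c.comp_continuousOn huc).mul hTc
  have hI : ∀ t ∈ Ioo (0:ℝ) t₀, HasDerivAt (fun t => ∫ z in ball (0:ℂ) ε, φ (u z t))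
      (∫ z in ball (0:ℂ) ε, -k (max (M - u z t) 0) * T (z, t)) t := by
    intro t ht
    obtain ⟨δ, hδ, hδs⟩ := Metric.nhds_basis_closedBall.mem_iff.1 (isOpen_Ioo.mem_nhds ht)
    have hcpt : IsCompact (closedBall (0:ℂ) ε ×ˢ closedBall t δ) :=
      (isCompact_closedBall _ _).prod (isCompact_closedBall _ _)
    have hcs : closedBall (0:ℂ) ε ×ˢ closedBall t δ ⊆ U :=
      (prod_mono subset_rfl hδs).trans hUsub
    obtain ⟨C, hC⟩ := hcpt.exists_bound_of_continuousOn (hDc.mono hcs)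
    refine (hasDerivAt_integral_of_dominated_loc_of_deriv_le (bound := fun _ => C)
      (F := fun t z => φ (u z t)) (F' := fun t z => -k (max (M - u z t) 0) * T (z, t))
      (Metric.closedBall_mem_nhds t hδ) ?_ ?_ ?_ ?_ ?_ ?_).2
    · filter_upwards [isOpen_Ioo.mem_nhds ht] with s hs
      exact (hint _ (hφc.comp_continuousOn (hsc s hs))).aestronglyMeasurable
    · exact hint _ (hφc.comp_continuousOn (hsc t ht))
    · refine (hint _ ?_).aestronglyMeasurable
      exact hDc.comp (f := fun z : ℂ => (z, t)) (by fun_prop) (fun z hz => hUsub ⟨hz, ht⟩)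
    · filter_upwards [ae_restrict_mem measurableSet_ball] with z hz s hs
      exact hC (z, s) ⟨ball_subset_closedBall hz, hs⟩
    · exact hint _ continuousOn_const
    · filter_upwards [ae_restrict_mem measurableSet_ball] with z hz s hs
      exact (hφ (u z s)).comp s (hTd z (ball_subset_closedBall hz) s (hδs hs))
  have hIneg : ∀ t ∈ Ioo (0:ℝ) t₀,
      ∫ z in ball (0:ℂ) ε, -k (max (M - u z t) 0) * T (z, t) ≤ 0 := by
    intro t ht
    refine le_of_eq_of_le ?_ (hspace t ht)
    refine setIntegral_congr_fun measurableSet_ball fun z hz => ?_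
    have hz' := ball_subset_closedBall hz
    have := (hTd z hz' t ht).unique (heq z hz' t ht)
    simp only [this, hψdef]
    ring
  have hanti : AntitoneOn (fun t => ∫ z in ball (0:ℂ) ε, φ (u z t)) (Ioo 0 t₀) := by
    refine antitoneOn_of_deriv_nonpos (convex_Ioo _ _)
      (fun t ht => (hI t ht).continuousAt.continuousWithinAt) ?_ ?_
    · rw [interior_Ioo]
      exact fun t ht => (hI t ht).differentiableAt.differentiableWithinAt
    · rw [interior_Ioo]
      intro t ht
      rw [(hI t ht).deriv]
      exact hIneg t ht
  have hIzero : ∀ t ∈ Ioo (0:ℝ) t₀, ∫ z in ball (0:ℂ) ε, φ (u z t) = 0 := by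
    intro t ht
    refine le_antisymm (ge_of_tendsto hL1 ?_) (integral_nonneg fun z => hφnn _)
    filter_upwards [Ioo_mem_nhdsGT ht.1] with s hs
    have hs' : s ∈ Ioo 0 t₀ := ⟨hs.1, hs.2.trans ht.2⟩
    refine (hanti hs' ht hs.2.le).trans ?_
    refine integral_mono (hint _ (hφc.comp_continuousOn (hsc s hs'))) (hint _ ?_)
      (fun z => hφle _)
    exact (show Continuous (fun x : ℝ => max (M - x) 0) by fun_prop).comp_continuousOn (hsc s hs')
  intro z hz t ht
  have hcont : ContinuousOn (fun z => φ (u z t)) (closedBall 0 ε) :=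
    hφc.comp_continuousOn (hsc t ht)
  have hae := (integral_eq_zero_iff_of_nonneg (fun z => hφnn (u z t)) (hint _ hcont)).1
    (hIzero t ht)
  have h0 := Measure.eqOn_open_of_ae_eq hae isOpen_ball (hcont.mono ball_subset_closedBall)
    continuousOn_const hz
  by_contra hlt
  have hp : 0 < M - u z t := by linarith [not_le.1 hlt]
  have := hat _ hp
  simp only [hφdef, max_eq_left hp.le, Pi.zero_apply] at h0
  linarith
end
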